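/- There is a constant C > 0 such that for every finite subset F ⊂ ℤ and every 0 < λ < 1, the number of x ∈ ℤ with sup_{N ≥ 2} 𝒜_N(𝟙_F)(x) > λ is at most C λ⁻¹ log²(e/λ) · #F. -/

import Mathlib

open scoped BigOperators

/-- The set of primes `p ≤ N`. -/
def primesUpTo (N : ℕ) : Finset ℕ := (Finset.range (N + 1)).filter Nat.Prime

/-- The average along the primes `𝒜_N f(x) = (1/π(N)) Σ_{p ∈ ℙ_N} f(x + p)`. -/
noncomputable def primeAvg (f : ℤ → ℝ) (N : ℕ) (x : ℤ) : ℝ :=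
  ((primesUpTo N).card : ℝ)⁻¹ * ∑ p ∈ primesUpTo N, f (x + p)

/-!
The primes of `(2 ^ (k - 1), 2 ^ k]`, each with weight `k`, are dominated by the sieve weight
`Λ_j g`. Here `Λ_j` is the normalised indicator of the integers coprime to all primes `≤ 2 ^ j`,
and `g` is a normalised Selberg weight for the primes of `(2 ^ j, 2 ^ (k / 20)]`, with `j` close
to `log₂ k`. Telescoping,
`Λ_j g = Λ_{j₀} + ∑_{j₀ ≤ i < j} (Λ_{i + 1} - Λ_i) + Λ_j (g - 1)`.

Since `Λ_{j₀} ≪ j₀ ^ 2`, the first term is controlled by the Hardy–Littlewood maximal function. The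
other kernels have exponential sums of size `O(i ^ A 2 ^ (-i))` relative to their length, so by
Parseval they have small `ℓ²` norm. The increments `Λ_{i + 1} - Λ_i` are periodic, so the supremum
over all lengths reduces to a Hardy–Littlewood maximal function of the correlation over one period;
the remainder `Λ_j (g - 1)` is only needed at the `O(2 ^ j)` scales `k` with `log₂ k` close to `j`.
The scales `k < 20 j₀ ^ 2` are trivial. Altogether the superlevel set has size
`≪ (j₀ ^ 2 λ⁻¹ + (3 / 4) ^ j₀ λ⁻²) #F`, and one takes `j₀` close to `4 log (1 / λ)`.
-/

namespace PrimeAverages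

open Finset

/-! ### Finite sets of bounded cardinality -/

section HasCardLE

variable {α : Type*} {s t : Set α} {c d : ℝ}

/-- The set `s` is finite and has at most `c` elements, where `c` is a real number.
Finiteness is part of the definition because `Set.ncard` vanishes on infinite sets. -/
def HasCardLE (s : Set α) (c : ℝ) : Prop := s.Finite ∧ (s.ncard : ℝ) ≤ c

lemma hasCardLE_iff_forall_finset :
    HasCardLE s c ↔ ∀ E : Finset α, (E : Set α) ⊆ s → (#E : ℝ) ≤ c := by
  constructor
  · rintro ⟨hs, hc⟩ E hE
    refine le_trans ?_ hc
    exact_mod_cast Set.ncard_coe_finset E ▸ Set.ncard_le_ncard hE hs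
  · intro h
    have hs : s.Finite := by
      by_contra hs
      obtain ⟨E, hE, hcard⟩ := Set.Infinite.exists_subset_card_eq hs (⌊c⌋₊ + 1)
      have := h E hE
      rw [hcard] at this
      exact (Nat.lt_floor_add_one c).not_ge (by exact_mod_cast this)
    lift s to Finset α using hs
    exact ⟨s.finite_toSet, by simpa only [Set.ncard_coe_finset] using h s subset_rfl⟩

lemma HasCardLE.mono (h : HasCardLE s c) (hts : t ⊆ s) (hcd : c ≤ d) : HasCardLE t d :=
  hasCardLE_iff_forall_finset.2 fun E hE =>
    (hasCardLE_iff_forall_finset.1 h E (hE.trans hts)).trans hcd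

lemma HasCardLE.union (hs : HasCardLE s c) (ht : HasCardLE t d) : HasCardLE (s ∪ t) (c + d) :=
  ⟨hs.1.union ht.1, calc
    ((s ∪ t).ncard : ℝ) ≤ s.ncard + t.ncard := by exact_mod_cast Set.ncard_union_le s t
    _ ≤ c + d := add_le_add hs.2 ht.2⟩

lemma HasCardLE.biUnion {ι : Type*} {s : ι → Set α} {c : ι → ℝ} (J : Finset ι)
    (h : ∀ j ∈ J, HasCardLE (s j) (c j)) : HasCardLE (⋃ j ∈ J, s j) (∑ j ∈ J, c j) :=
  ⟨J.finite_toSet.biUnion fun j hj => (h j hj).1, calc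
    ((⋃ j ∈ J, s j).ncard : ℝ) ≤ ∑ j ∈ J, ((s j).ncard : ℝ) := by
      exact_mod_cast J.set_ncard_biUnion_le s
    _ ≤ ∑ j ∈ J, c j := sum_le_sum fun j hj => (h j hj).2⟩

lemma HasCardLE.iUnion {ι : Type*} {s : ι → Set α} {c : ι → ℝ}
    (h : ∀ j, HasCardLE (s j) (c j)) (hc : ∀ J : Finset ι, ∑ j ∈ J, c j ≤ d) :
    HasCardLE (⋃ j, s j) d := by
  classical
  refine hasCardLE_iff_forall_finset.2 fun E hE => ?_
  choose j hj using fun x : E => Set.mem_iUnion.1 (hE x.2)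
  have hsub : (E : Set α) ⊆ ⋃ i ∈ univ.image j, s i := fun x hx =>
    Set.mem_biUnion (mem_image_of_mem j (mem_univ ⟨x, hx⟩)) (hj ⟨x, hx⟩)
  exact (hasCardLE_iff_forall_finset.1 (HasCardLE.biUnion _ fun i _ => h i) E hsub).trans (hc _)

end HasCardLE

/-! ### The one-sided maximal function along an arithmetic progression -/

section Maximal

variable {L : ℕ}

/-- The superlevel set `{Mg ≥ t}` of the one-sided Hardy–Littlewood maximal function
`Mg(x) = sup_{K ≥ 1} K⁻¹ ∑_{m < K} g(x + L m)` along progressions of step `L`. -/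
def maximalSet (L : ℕ) (g : ℤ → ℝ) (t : ℝ) : Set ℤ :=
  {x | ∃ K : ℕ, 0 < K ∧ t * K ≤ ∑ m ∈ range K, g (x + L * m)}

lemma injective_add_mul_natCast (hL : 0 < L) (x : ℤ) :
    Function.Injective fun m : ℕ => x + L * (m : ℤ) := fun a b h => by
  simpa [hL.ne'] using h

lemma add_mul_notMem_image_of_le (hL : 0 < L) {x y : ℤ} (hxy : x ≤ y) {K : ℕ}
    (hy : y ∉ (range K).image fun m : ℕ => x + L * (m : ℤ)) (m : ℕ) :
    y + L * (m : ℤ) ∉ (range K).image fun m : ℕ => x + L * (m : ℤ) := by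
  simp only [mem_image, mem_range, not_exists, not_and] at hy ⊢
  intro k hk hkm
  have hmk : m ≤ k := by
    by_contra! hlt
    have : (L : ℤ) * k < L * m := by gcongr
    linarith
  exact hy (k - m) (by omega) (by push_cast [hmk]; linarith)

-- Greedy selection: keep the progression started at the least point of `E` and discard the
-- points of `E` it covers; progressions started later at uncovered points are disjoint from it.
lemma exists_finset_mul_card_le_sum (hL : 0 < L) {g : ℤ → ℝ} {t : ℝ} (ht : 0 ≤ t)
    (E : Finset ℤ) (hE : (E : Set ℤ) ⊆ maximalSet L g t) :
    ∃ Y : Finset ℤ, (∀ y ∈ Y, ∃ x ∈ E, ∃ m : ℕ, y = x + L * (m : ℤ)) ∧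
      t * #E ≤ ∑ y ∈ Y, g y := by
  induction E using Finset.strongInduction with
  | H E ih =>
    rcases E.eq_empty_or_nonempty with rfl | hne
    · exact ⟨∅, by simp, by simp⟩
    set x := E.min' hne
    have hxE : x ∈ E := E.min'_mem hne
    obtain ⟨K, hK0, hK⟩ := hE hxE
    set B := (range K).image fun m : ℕ => x + L * (m : ℤ)
    have hxB : x ∈ B := mem_image.2 ⟨0, mem_range.2 hK0, by simp⟩
    have hlt : E \ B ⊂ E := ssubset_iff_of_subset sdiff_subset |>.2
      ⟨x, hxE, fun hx => (mem_sdiff.1 hx).2 hxB⟩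
    obtain ⟨Y, hY, hYsum⟩ := ih (E \ B) hlt ((coe_subset.2 sdiff_subset).trans hE)
    have hdisj : Disjoint Y B := disjoint_left.2 fun y hy => by
      obtain ⟨z, hz, m, rfl⟩ := hY y hy
      obtain ⟨hzE, hzB⟩ := mem_sdiff.1 hz
      exact add_mul_notMem_image_of_le hL (E.min'_le z hzE) hzB m
    refine ⟨Y ∪ B, fun y hy => ?_, ?_⟩
    · rcases mem_union.1 hy with hy | hy
      · obtain ⟨z, hz, hzy⟩ := hY y hy
        exact ⟨z, (mem_sdiff.1 hz).1, hzy⟩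
      · obtain ⟨m, -, rfl⟩ := mem_image.1 hy
        exact ⟨x, hxE, m, rfl⟩
    · have hcard : (#E : ℝ) ≤ #(E \ B) + K := by
        have hB : #B ≤ K := card_image_le.trans_eq (card_range K)
        exact_mod_cast card_le_card_sdiff_add_card.trans (Nat.add_le_add_left hB _)
      calc t * #E ≤ t * (#(E \ B) + K) := by gcongr
        _ = t * #(E \ B) + t * K := mul_add ..
        _ ≤ ∑ y ∈ Y, g y + ∑ m ∈ range K, g (x + L * m) := add_le_add hYsum hK
        _ = ∑ y ∈ Y ∪ B, g y := by
          rw [sum_union hdisj, sum_image (injective_add_mul_natCast hL x).injOn]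

lemma hasCardLE_maximalSet (hL : 0 < L) {g : ℤ → ℝ} {t c : ℝ} (ht : 0 < t)
    (hg : ∀ Y : Finset ℤ, ∑ y ∈ Y, g y ≤ c) : HasCardLE (maximalSet L g t) (c / t) := by
  refine hasCardLE_iff_forall_finset.2 fun E hE => ?_
  obtain ⟨Y, -, hY⟩ := exists_finset_mul_card_le_sum hL ht.le E hE
  rw [le_div_iff₀' ht]
  exact hY.trans (hg Y)

lemma maximalSet_subset_sq {g : ℤ → ℝ} {t : ℝ} (ht : 0 ≤ t) :
    maximalSet L g t ⊆ maximalSet L (fun x => g x ^ 2) (t ^ 2) := by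
  rintro x ⟨K, hK0, hK⟩
  have hK0' : (0 : ℝ) < K := by exact_mod_cast hK0
  refine ⟨K, hK0, le_of_mul_le_mul_left ?_ hK0'⟩
  calc (K : ℝ) * (t ^ 2 * K) = (t * K) ^ 2 := by ring
    _ ≤ (∑ m ∈ range K, g (x + L * m)) ^ 2 := pow_le_pow_left₀ (by positivity) hK 2
    _ ≤ K * ∑ m ∈ range K, g (x + L * m) ^ 2 := by
      simpa only [card_range] using sq_sum_le_card_mul_sum_sq (s := range K)

lemma hasCardLE_maximalSet_of_sq (hL : 0 < L) {g : ℤ → ℝ} {t c : ℝ} (ht : 0 < t)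
    (hg : ∀ Y : Finset ℤ, ∑ y ∈ Y, g y ^ 2 ≤ c) : HasCardLE (maximalSet L g t) (c / t ^ 2) :=
  (hasCardLE_maximalSet hL (by positivity) hg).mono (maximalSet_subset_sq ht.le) le_rfl

lemma hasCardLE_setOf_le_of_sq {g : ℤ → ℝ} {t c : ℝ} (ht : 0 < t)
    (hg : ∀ Y : Finset ℤ, ∑ y ∈ Y, g y ^ 2 ≤ c) : HasCardLE {x | t ≤ g x} (c / t ^ 2) :=
  (hasCardLE_maximalSet_of_sq one_pos ht hg).mono
    (fun x hx => ⟨1, one_pos, by simpa using hx⟩) le_rfl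

end Maximal

/-! ### Correlations and their `ℓ²` bound -/

section Correlation

open MeasureTheory AddCircle

/-- The truncated correlation `x ↦ ∑_{n < N} K(n) f(x + n)` of `f` with the kernel `K`. -/
noncomputable def corr (N : ℕ) (K : ℕ → ℝ) (f : ℤ → ℝ) (x : ℤ) : ℝ :=
  ∑ n ∈ range N, K n * f (x + n)

/-- The trigonometric polynomial `θ ↦ ∑_{y ∈ Y} c(y) e(yθ)` on the circle. -/
noncomputable def trigPoly (Y : Finset ℤ) (c : ℤ → ℝ) : C(UnitAddCircle, ℂ) :=
  ∑ y ∈ Y, (c y : ℂ) • fourier y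

lemma norm_toLp_trigPoly_sq (Y : Finset ℤ) (c : ℤ → ℝ) :
    ‖ContinuousMap.toLp (E := ℂ) 2 haarAddCircle ℂ (trigPoly Y c)‖ ^ 2 = ∑ y ∈ Y, c y ^ 2 := by
  have hsum : ContinuousMap.toLp (E := ℂ) 2 haarAddCircle ℂ (trigPoly Y c)
      = ∑ y ∈ Y, (c y : ℂ) • fourierLp (T := 1) 2 y := by
    simp only [trigPoly, map_sum, map_smul]
  have hinner := orthonormal_fourier.inner_sum (fun y => (c y : ℂ)) (fun y => (c y : ℂ)) Y
    (𝕜 := ℂ) (v := fourierLp (T := 1) 2)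
  rw [hsum]
  refine Complex.ofReal_injective ?_
  rw [inner_self_eq_norm_sq_to_K] at hinner
  push_cast
  simpa [pow_two] using hinner

lemma trigPoly_corr (N : ℕ) (K : ℕ → ℝ) {f : ℤ → ℝ} {F Y : Finset ℤ} (hf : ∀ z ∉ F, f z = 0)
    (hY : ∀ z ∈ F, ∀ n ∈ range N, z - (n : ℤ) ∈ Y) (θ : UnitAddCircle) :
    trigPoly Y (corr N K f) θ
      = (∑ n ∈ range N, (K n : ℂ) * (fourier (-1) θ) ^ n) * trigPoly F f θ := by
  have hshift : ∀ n ∈ range N, ∑ y ∈ Y, (f (y + n) : ℂ) * fourier (y + n) θ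
      = ∑ z ∈ F, (f z : ℂ) * fourier z θ := fun n hn => by
    have hmap := sum_map Y (addRightEmbedding (n : ℤ)) fun z => (f z : ℂ) * fourier z θ
    simp only [addRightEmbedding_apply] at hmap
    rw [← hmap]
    refine (sum_subset (fun z hz => ?_) fun z _ hz => by simp [hf z hz]).symm
    exact mem_map.2 ⟨z - n, hY z hz n hn, by simp⟩
  have hpow (n : ℕ) : fourier (-1) θ ^ n = fourier (-(n : ℤ)) θ := by
    simp only [fourier_apply, ← Circle.coe_pow, ← toCircle_nsmul, neg_smul, one_smul, smul_neg,
      natCast_zsmul]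
  simp only [trigPoly, ContinuousMap.sum_apply, ContinuousMap.smul_apply, smul_eq_mul, corr,
    Complex.ofReal_sum, Complex.ofReal_mul, sum_mul]
  rw [sum_comm]
  refine sum_congr rfl fun n hn => ?_
  rw [← hshift n hn, mul_sum]
  refine sum_congr rfl fun y _ => ?_
  have : (fourier y θ : ℂ) = fourier (-(n : ℤ)) θ * fourier (y + n) θ := by
    rw [← fourier_add]; congr 2; ring
  rw [this, hpow]
  ring

lemma sum_corr_sq_le {N : ℕ} {K : ℕ → ℝ} {B : ℝ}
    (hB : ∀ ω : ℂ, ‖ω‖ = 1 → ‖∑ n ∈ range N, (K n : ℂ) * ω ^ n‖ ≤ B)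
    {f : ℤ → ℝ} {F : Finset ℤ} (hf : ∀ z ∉ F, f z = 0) (Y : Finset ℤ) :
    ∑ y ∈ Y, corr N K f y ^ 2 ≤ B ^ 2 * ∑ z ∈ F, f z ^ 2 := by
  classical
  set Z := Y ∪ (F ×ˢ range N).image fun zn => zn.1 - (zn.2 : ℤ)
  have hZ : ∀ z ∈ F, ∀ n ∈ range N, z - (n : ℤ) ∈ Z := fun z hz n hn =>
    mem_union_right _ (mem_image.2 ⟨(z, n), mem_product.2 ⟨hz, hn⟩, rfl⟩)
  have hpointwise (θ : UnitAddCircle) :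
      ‖trigPoly Z (corr N K f) θ‖ ≤ B * ‖trigPoly F f θ‖ := by
    rw [trigPoly_corr N K hf hZ, norm_mul]
    gcongr
    exact hB _ (by rw [fourier_apply, Circle.norm_coe])
  have hLp := Lp.norm_le_mul_norm_of_ae_le_mul (c := B)
    (f := ContinuousMap.toLp (E := ℂ) 2 haarAddCircle ℂ (trigPoly Z (corr N K f)))
    (g := ContinuousMap.toLp (E := ℂ) 2 haarAddCircle ℂ (trigPoly F f)) (by
      filter_upwards [ContinuousMap.coeFn_toLp (p := 2) (𝕜 := ℂ) haarAddCircle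
        (trigPoly Z (corr N K f)), ContinuousMap.coeFn_toLp (p := 2) (𝕜 := ℂ) haarAddCircle
        (trigPoly F f)] with θ h₁ h₂
      rw [h₁, h₂]
      exact hpointwise θ)
  calc ∑ y ∈ Y, corr N K f y ^ 2 ≤ ∑ y ∈ Z, corr N K f y ^ 2 :=
        sum_le_sum_of_subset_of_nonneg subset_union_left fun _ _ _ => sq_nonneg _
    _ ≤ (B * ‖ContinuousMap.toLp (E := ℂ) 2 haarAddCircle ℂ (trigPoly F f)‖) ^ 2 := by
        rw [← norm_toLp_trigPoly_sq]
        exact pow_le_pow_left₀ (norm_nonneg _) hLp 2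
    _ = B ^ 2 * ∑ z ∈ F, f z ^ 2 := by rw [mul_pow, norm_toLp_trigPoly_sq]

end Correlation

/-! ### Exponential sums -/

section ExpSum

variable {φ : ℕ → ℝ} {ω : ℂ} {M : ℕ}

/-- The exponential sum `∑_{n < N} φ(n) ω^n`. For `ω = e(ξ)` on the unit circle it is the Fourier
transform at the frequency `ξ` of `φ` restricted to `[0, N)`; for `ω ^ N = 1` it is a discrete
Fourier coefficient of `φ` modulo `N`. -/
noncomputable def expSum (N : ℕ) (φ : ℕ → ℝ) (ω : ℂ) : ℂ := ∑ n ∈ range N, (φ n : ℂ) * ω ^ n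

lemma expSum_zero_left (N : ℕ) (ω : ℂ) : expSum N 0 ω = 0 := by simp [expSum]

lemma expSum_add (N : ℕ) (φ ψ : ℕ → ℝ) (ω : ℂ) :
    expSum N (φ + ψ) ω = expSum N φ ω + expSum N ψ ω := by
  simp only [expSum, Pi.add_apply, Complex.ofReal_add, add_mul, sum_add_distrib]

lemma expSum_smul (N : ℕ) (a : ℝ) (φ : ℕ → ℝ) (ω : ℂ) :
    expSum N (a • φ) ω = a * expSum N φ ω := by
  simp only [expSum, Pi.smul_apply, smul_eq_mul, Complex.ofReal_mul, mul_assoc, mul_sum]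

lemma expSum_sub (N : ℕ) (φ ψ : ℕ → ℝ) (ω : ℂ) :
    expSum N (φ - ψ) ω = expSum N φ ω - expSum N ψ ω := by
  simp only [expSum, Pi.sub_apply, Complex.ofReal_sub, sub_mul, sum_sub_distrib]

lemma expSum_one (N : ℕ) (φ : ℕ → ℝ) : expSum N φ 1 = ((∑ n ∈ range N, φ n : ℝ) : ℂ) := by
  simp [expSum]

lemma norm_expSum_le (hω : ‖ω‖ = 1) (N : ℕ) (φ : ℕ → ℝ) :
    ‖expSum N φ ω‖ ≤ ∑ n ∈ range N, |φ n| :=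
  (norm_sum_le _ _).trans_eq <| sum_congr rfl fun n _ => by simp [hω]

lemma sum_range_mul_eq_sum_sum {A : Type*} [AddCommMonoid A] (u v : ℕ) (f : ℕ → A) :
    ∑ n ∈ range (u * v), f n = ∑ i ∈ range v, ∑ m ∈ range u, f (m + i * u) := by
  induction v with
  | zero => simp
  | succ v ih =>
    rw [Nat.mul_succ, sum_range_add, ih, sum_range_succ]
    exact congrArg _ (sum_congr rfl fun m _ => by rw [add_comm, mul_comm])

lemma sum_range_mul_of_periodic {u : ℕ} (hφ : Function.Periodic φ u) (v : ℕ) :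
    ∑ n ∈ range (u * v), φ n = v * ∑ n ∈ range u, φ n := by
  have hshift (i m : ℕ) : φ (m + i * u) = φ m := hφ.nsmul i m
  simp only [sum_range_mul_eq_sum_sum, hshift, sum_const, card_range, nsmul_eq_mul]

lemma expSum_mul_of_periodic {u : ℕ} (hφ : Function.Periodic φ u) (v : ℕ) (ω : ℂ) :
    expSum (u * v) φ ω = (∑ i ∈ range v, (ω ^ u) ^ i) * expSum u φ ω := by
  have hshift (i m : ℕ) : φ (m + i * u) = φ m := hφ.nsmul i m
  simp only [expSum, sum_range_mul_eq_sum_sum, hshift, sum_mul_sum]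
  exact sum_congr rfl fun i _ => sum_congr rfl fun m _ => by ring

lemma expSum_eq_zero_of_periodic {u : ℕ} (hφ : Function.Periodic φ u) (huM : u ∣ M)
    (hω : ω ^ M = 1) (hωu : ω ^ u ≠ 1) : expSum M φ ω = 0 := by
  obtain ⟨v, rfl⟩ := huM
  have hgeom : (∑ i ∈ range v, (ω ^ u) ^ i) * (ω ^ u - 1) = 0 := by
    rw [geom_sum_mul, ← pow_mul, hω, sub_self]
  rw [expSum_mul_of_periodic hφ,
    (mul_eq_zero.1 hgeom).resolve_right (sub_ne_zero.2 hωu), zero_mul]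

end ExpSum

/-! ### Roots of unity and the geometric sum -/

section Roots

open Polynomial (nthRootsFinset mem_nthRootsFinset)

variable {φ : ℕ → ℝ} {ω ζ : ℂ} {M : ℕ}

lemma norm_geom_sum_le_card (hω : ‖ω‖ = 1) (N : ℕ) : ‖∑ n ∈ range N, ω ^ n‖ ≤ N :=
  (norm_sum_le _ _).trans (by simp [hω])

lemma norm_geom_sum_le_two_div {δ : ℝ} (hω : ‖ω‖ = 1) (hδ : 0 < δ) (h : δ ≤ ‖ω - 1‖) (N : ℕ) :
    ‖∑ n ∈ range N, ω ^ n‖ ≤ 2 / δ := by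
  rw [le_div_iff₀ hδ]
  calc ‖∑ n ∈ range N, ω ^ n‖ * δ ≤ ‖∑ n ∈ range N, ω ^ n‖ * ‖ω - 1‖ := by gcongr
    _ = ‖ω ^ N - 1‖ := by rw [← norm_mul, geom_sum_mul]
    _ ≤ ‖ω ^ N‖ + ‖(1 : ℂ)‖ := norm_sub_le _ _
    _ = 2 := by rw [norm_pow, hω]; norm_num

lemma sum_norm_geom_sum_le_of_separated {S : Finset ℂ} {δ : ℝ} (hδ : 0 < δ)
    (hS : ∀ ζ ∈ S, ‖ζ‖ = 1) (hsep : ∀ ζ ∈ S, ∀ ζ' ∈ S, ζ ≠ ζ' → 2 * δ ≤ ‖ζ - ζ'‖)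
    (hω : ‖ω‖ = 1) (N : ℕ) :
    ∑ ζ ∈ S, ‖∑ n ∈ range N, (ζ * ω) ^ n‖ ≤ N + #S * (2 / δ) := by
  have hnorm : ∀ ζ ∈ S, ‖ζ * ω‖ = 1 := fun ζ hζ => by rw [norm_mul, hS ζ hζ, hω, one_mul]
  have hnear : #{ζ ∈ S | ‖ζ * ω - 1‖ < δ} ≤ 1 := by
    refine card_le_one.2 fun ζ hζ ζ' hζ' => ?_
    rw [mem_filter] at hζ hζ'
    by_contra hne
    have : ‖ζ - ζ'‖ ≤ ‖ζ * ω - 1‖ + ‖ζ' * ω - 1‖ := by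
      rw [← mul_one ‖ζ - ζ'‖, ← hω, ← norm_mul, sub_mul, norm_sub_rev (ζ' * ω)]
      exact norm_sub_le_norm_sub_add_norm_sub _ _ _
    linarith [hsep ζ hζ.1 ζ' hζ'.1 hne, hζ.2, hζ'.2]
  rw [← sum_filter_add_sum_filter_not S fun ζ => ‖ζ * ω - 1‖ < δ]
  gcongr ?_ + ?_
  · calc ∑ ζ ∈ S with ‖ζ * ω - 1‖ < δ, ‖∑ n ∈ range N, (ζ * ω) ^ n‖
        ≤ #{ζ ∈ S | ‖ζ * ω - 1‖ < δ} • (N : ℝ) :=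
          sum_le_card_nsmul _ _ _ fun ζ hζ =>
            norm_geom_sum_le_card (hnorm ζ (mem_filter.1 hζ).1) N
      _ ≤ 1 • (N : ℝ) := nsmul_le_nsmul_left N.cast_nonneg hnear
      _ = N := one_smul ..
  · calc ∑ ζ ∈ S with ¬‖ζ * ω - 1‖ < δ, ‖∑ n ∈ range N, (ζ * ω) ^ n‖
        ≤ #{ζ ∈ S | ¬‖ζ * ω - 1‖ < δ} • (2 / δ) :=
          sum_le_card_nsmul _ _ _ fun ζ hζ => norm_geom_sum_le_two_div
            (hnorm ζ (mem_filter.1 hζ).1) hδ (not_lt.1 (mem_filter.1 hζ).2) N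
      _ ≤ #S * (2 / δ) := by
          rw [nsmul_eq_mul]
          gcongr
          exact filter_subset _ _

lemma four_div_le_norm_sub_one {q : ℕ} (hq : 0 < q) (hζ : ζ ^ q = 1) (hne : ζ ≠ 1) :
    4 / (q : ℝ) ≤ ‖ζ - 1‖ := by
  have hnorm : ‖ζ‖ = 1 := Complex.norm_eq_one_of_pow_eq_one hζ hq.ne'
  have hζ0 : ζ ≠ 0 := norm_ne_zero_iff.1 (by rw [hnorm]; exact one_ne_zero)
  have hexp : Complex.exp (ζ.arg * Complex.I) = ζ := by
    simpa [hnorm] using Complex.norm_mul_exp_arg_mul_I ζ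
  obtain ⟨m, hm⟩ : ∃ m : ℤ, q * ζ.arg = m * (2 * Real.pi) := by
    have : Complex.exp (q * (ζ.arg * Complex.I)) = 1 := by rw [Complex.exp_nat_mul, hexp, hζ]
    obtain ⟨m, hm⟩ := Complex.exp_eq_one_iff.1 this
    refine ⟨m, Complex.ofReal_injective (mul_right_cancel₀ Complex.I_ne_zero ?_)⟩
    push_cast
    linear_combination hm
  have hm0 : m ≠ 0 := by
    rintro rfl
    have harg : ζ.arg = 0 := by simpa [hq.ne'] using hm
    exact hne (by rw [← hexp, harg]; simp)
  have hq' : (0 : ℝ) < q := by exact_mod_cast hq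
  have harg : 2 * Real.pi ≤ q * |ζ.arg| := by
    have h1 : (1 : ℝ) ≤ |(m : ℝ)| := by exact_mod_cast Int.one_le_abs hm0
    rw [← Nat.abs_cast q, ← abs_mul, hm, abs_mul, abs_of_pos Real.two_pi_pos]
    nlinarith [Real.two_pi_pos]
  have hchord := Complex.mul_angle_le_norm_sub hnorm norm_one
  rw [Complex.angle_one_right hζ0] at hchord
  refine le_trans ?_ hchord
  rw [div_mul_eq_mul_div, div_le_div_iff₀ hq' Real.pi_pos]
  linarith

lemma sum_nthRootsFinset_pow_mul_inv_pow {m n : ℕ} (hm : m < M) (hn : n < M) :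
    ∑ ζ ∈ nthRootsFinset M (1 : ℂ), ζ ^ n * ζ⁻¹ ^ m = if m = n then (M : ℂ) else 0 := by
  have hM : 0 < M := hm.pos
  set ζ₀ := Complex.exp (2 * Real.pi * Complex.I / M)
  have hζ₀ : IsPrimitiveRoot ζ₀ M := Complex.isPrimitiveRoot_exp M hM.ne'
  have hne : ∀ ζ ∈ nthRootsFinset M (1 : ℂ), ζ ≠ 0 := fun ζ hζ =>
    Polynomial.ne_zero_of_mem_nthRootsFinset one_ne_zero hζ
  split_ifs with h
  · subst h
    rw [sum_congr rfl fun ζ hζ => by rw [← mul_pow, mul_inv_cancel₀ (hne ζ hζ), one_pow],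
      sum_const, hζ₀.card_nthRootsFinset, nsmul_one]
  -- The sum is invariant under `ζ ↦ ζ₀ ζ`, which multiplies it by `ζ₀ ^ (n - m) ≠ 1`.
  · have hζ₀M : ζ₀ ∈ nthRootsFinset M (1 : ℂ) := hζ₀.mem_nthRootsFinset hM
    have hinv : ∑ ζ ∈ nthRootsFinset M (1 : ℂ), ζ ^ n * ζ⁻¹ ^ m
        = (ζ₀ ^ n * ζ₀⁻¹ ^ m) * ∑ ζ ∈ nthRootsFinset M (1 : ℂ), ζ ^ n * ζ⁻¹ ^ m := by
      rw [mul_sum]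
      refine (sum_nbij' (ζ₀ * ·) (ζ₀⁻¹ * ·) ?_ ?_ ?_ ?_ ?_).symm
      · intro ζ hζ; simpa using Polynomial.mul_mem_nthRootsFinset hζ₀M hζ
      · intro ζ hζ
        rw [mem_nthRootsFinset hM] at hζ ⊢
        rw [mul_pow, inv_pow, hζ₀.pow_eq_one, hζ, inv_one, one_mul]
      · intro ζ _; simp [hne ζ₀ hζ₀M]
      · intro ζ _; simp [hne ζ₀ hζ₀M]
      · intro ζ _; rw [mul_inv, mul_pow, mul_pow]; ring
    have hne1 : ζ₀ ^ n * ζ₀⁻¹ ^ m ≠ 1 := by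
      rw [inv_pow, Ne, mul_inv_eq_one₀ (pow_ne_zero _ (hne ζ₀ hζ₀M))]
      exact fun heq => h (hζ₀.pow_inj hn hm heq).symm
    have hzero : (ζ₀ ^ n * ζ₀⁻¹ ^ m - 1) *
        ∑ ζ ∈ nthRootsFinset M (1 : ℂ), ζ ^ n * ζ⁻¹ ^ m = 0 := by
      rw [sub_mul, one_mul, ← hinv, sub_self]
    exact (mul_eq_zero.1 hzero).resolve_left (sub_ne_zero.2 hne1)

lemma mul_eq_sum_expSum_mul_pow (hM : 0 < M) (hφ : Function.Periodic φ M) (n : ℕ) :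
    (M : ℂ) * φ n = ∑ ζ ∈ nthRootsFinset M (1 : ℂ), expSum M φ ζ⁻¹ * ζ ^ n := by
  have hred : ∀ ζ ∈ nthRootsFinset M (1 : ℂ), ζ ^ n = ζ ^ (n % M) := fun ζ hζ =>
    pow_eq_pow_mod n ((mem_nthRootsFinset hM 1).1 hζ)
  calc (M : ℂ) * φ n = ∑ m ∈ range M, (φ m : ℂ) * if m = n % M then (M : ℂ) else 0 := by
        simp only [mul_ite, mul_zero, sum_ite_eq', mem_range, Nat.mod_lt n hM, if_true,
          hφ.map_mod_nat, mul_comm]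
    _ = ∑ m ∈ range M, (φ m : ℂ) * ∑ ζ ∈ nthRootsFinset M (1 : ℂ), ζ ^ (n % M) * ζ⁻¹ ^ m :=
        sum_congr rfl fun m hm => by
          rw [sum_nthRootsFinset_pow_mul_inv_pow (mem_range.1 hm) (Nat.mod_lt n hM)]
    _ = ∑ ζ ∈ nthRootsFinset M (1 : ℂ), expSum M φ ζ⁻¹ * ζ ^ n := by
        simp only [mul_sum, expSum, sum_mul]
        rw [sum_comm]
        refine sum_congr rfl fun ζ hζ => sum_congr rfl fun m _ => ?_
        rw [hred ζ hζ]
        ring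

end Roots

/-! ### Combinations of divisibility indicators -/

section LevelSpace

open Polynomial (nthRootsFinset mem_nthRootsFinset)

variable {M D D' d : ℕ} {φ ψ : ℕ → ℝ} {ω : ℂ}

/-- The indicator function `n ↦ 1_{d ∣ n}`. -/
noncomputable def dvdIndicator (d n : ℕ) : ℝ := if d ∣ n then 1 else 0

lemma dvdIndicator_periodic (d : ℕ) : Function.Periodic (dvdIndicator d) d := fun n => by
  simp [dvdIndicator]

lemma dvdIndicator_nonneg (d n : ℕ) : 0 ≤ dvdIndicator d n := by
  unfold dvdIndicator; split_ifs <;> norm_num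

lemma dvdIndicator_mul (d e : ℕ) :
    dvdIndicator d * dvdIndicator e = dvdIndicator (Nat.lcm d e) := by
  funext n
  simp only [dvdIndicator, Pi.mul_apply, Nat.lcm_dvd_iff, ite_zero_mul_ite_zero, one_mul]

lemma sum_range_mul_ite_dvd {A : Type*} [AddCommMonoid A] (hd : 0 < d) (M : ℕ) (φ : ℕ → A) :
    ∑ n ∈ range (d * M), (if d ∣ n then φ n else 0) = ∑ m ∈ range M, φ (d * m) := by
  rw [← sum_filter]
  refine sum_nbij' (· / d) (d * ·) ?_ ?_ ?_ ?_ ?_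
  · intro n hn
    simp only [mem_filter, mem_range] at hn ⊢
    exact Nat.div_lt_of_lt_mul hn.1
  · intro m hm
    simp only [mem_filter, mem_range] at hm ⊢
    exact ⟨Nat.mul_lt_mul_of_pos_left hm hd, dvd_mul_right _ _⟩
  · intro n hn; exact Nat.mul_div_cancel' (mem_filter.1 hn).2
  · intro m _; exact Nat.mul_div_cancel_left m hd
  · intro n hn; rw [Nat.mul_div_cancel' (mem_filter.1 hn).2]

/-- The span of the indicators `1_{d ∣ n}` with `d ∣ M` and `0 < d ≤ D`: functions of period `M`
all of whose frequencies modulo one have denominator at most `D`. -/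
noncomputable def levelSpace (M D : ℕ) : Submodule ℝ (ℕ → ℝ) :=
  Submodule.span ℝ {φ | ∃ d, d ∣ M ∧ 0 < d ∧ d ≤ D ∧ φ = dvdIndicator d}

lemma dvdIndicator_mem_levelSpace (hdM : d ∣ M) (hd : 0 < d) (hdD : d ≤ D) :
    dvdIndicator d ∈ levelSpace M D :=
  Submodule.subset_span ⟨d, hdM, hd, hdD, rfl⟩

lemma levelSpace_mono (h : D ≤ D') : levelSpace M D ≤ levelSpace M D' :=
  Submodule.span_mono fun _ ⟨d, hdM, hd, hdD, hφ⟩ => ⟨d, hdM, hd, hdD.trans h, hφ⟩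

lemma one_mem_levelSpace (hD : 0 < D) : (1 : ℕ → ℝ) ∈ levelSpace M D := by
  have h1 : (1 : ℕ → ℝ) = dvdIndicator 1 := by funext n; simp [dvdIndicator]
  exact h1 ▸ dvdIndicator_mem_levelSpace (one_dvd M) one_pos hD

lemma mul_mem_levelSpace (hφ : φ ∈ levelSpace M D) (hψ : ψ ∈ levelSpace M D') :
    φ * ψ ∈ levelSpace M (D * D') := by
  have hmul := Submodule.mul_mem_mul hφ hψ
  rw [levelSpace, levelSpace, Submodule.span_mul_span] at hmul
  refine Submodule.span_mono ?_ hmul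
  rintro _ ⟨_, ⟨d, hdM, hd, hdD, rfl⟩, _, ⟨e, heM, he, heD, rfl⟩, rfl⟩
  exact ⟨d.lcm e, Nat.lcm_dvd hdM heM, Nat.lcm_pos hd he,
    (Nat.le_of_dvd (by positivity) (Nat.lcm_dvd_mul d e)).trans (Nat.mul_le_mul hdD heD),
    dvdIndicator_mul d e⟩

lemma periodic_of_mem_levelSpace (hφ : φ ∈ levelSpace M D) : Function.Periodic φ M := by
  intro n
  induction hφ using Submodule.span_induction with
  | mem x hx =>
    obtain ⟨d, hdM, -, -, rfl⟩ := hx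
    simp [dvdIndicator, Nat.dvd_add_left hdM]
  | zero => simp
  | add x y _ _ hx hy => simp [hx, hy]
  | smul a x _ hx => simp [hx]

lemma expSum_eq_zero_of_mem_levelSpace (hφ : φ ∈ levelSpace M D) (hω : ω ^ M = 1)
    (h : ∀ d, 0 < d → d ≤ D → ω ^ d ≠ 1) : expSum M φ ω = 0 := by
  induction hφ using Submodule.span_induction with
  | mem x hx =>
    obtain ⟨d, hdM, hd, hdD, rfl⟩ := hx
    exact expSum_eq_zero_of_periodic (dvdIndicator_periodic d) hdM hω (h d hd hdD)
  | zero => exact expSum_zero_left M ω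
  | add x y _ _ hx hy => rw [expSum_add, hx, hy, add_zero]
  | smul a x _ hx => rw [expSum_smul, hx, mul_zero]

/-- The complex numbers of finite multiplicative order at most `D`. -/
noncomputable def rootsUpTo (D : ℕ) : Finset ℂ :=
  (Icc 1 D).biUnion fun d => nthRootsFinset d (1 : ℂ)

lemma mem_rootsUpTo {ζ : ℂ} : ζ ∈ rootsUpTo D ↔ ∃ d, 0 < d ∧ d ≤ D ∧ ζ ^ d = 1 := by
  simp only [rootsUpTo, mem_biUnion, mem_Icc, Nat.succ_le_iff, and_assoc]
  exact exists_congr fun d => and_congr_right fun hd => by rw [mem_nthRootsFinset hd]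

lemma card_rootsUpTo_le (D : ℕ) : #(rootsUpTo D) ≤ D ^ 2 := calc
  #(rootsUpTo D) ≤ ∑ d ∈ Icc 1 D, #(nthRootsFinset d (1 : ℂ)) := card_biUnion_le
  _ ≤ ∑ _d ∈ Icc 1 D, D := sum_le_sum fun d hd => by
    classical
    rw [Polynomial.nthRootsFinset_def]
    exact ((Multiset.toFinset_card_le _).trans (Polynomial.card_nthRoots d 1)).trans
      (mem_Icc.1 hd).2
  _ = D ^ 2 := by rw [sum_const, Nat.card_Icc, Nat.add_sub_cancel, smul_eq_mul, sq]

lemma norm_eq_one_of_mem_rootsUpTo {ζ : ℂ} (hζ : ζ ∈ rootsUpTo D) : ‖ζ‖ = 1 := by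
  obtain ⟨d, hd, -, hζd⟩ := mem_rootsUpTo.1 hζ
  exact Complex.norm_eq_one_of_pow_eq_one hζd hd.ne'

lemma four_div_sq_le_norm_sub {ζ ζ' : ℂ} (hζ : ζ ∈ rootsUpTo D) (hζ' : ζ' ∈ rootsUpTo D)
    (hne : ζ ≠ ζ') : 4 / (D : ℝ) ^ 2 ≤ ‖ζ - ζ'‖ := by
  have hnorm := norm_eq_one_of_mem_rootsUpTo hζ'
  have hζ'0 : ζ' ≠ 0 := norm_ne_zero_iff.1 (by rw [hnorm]; exact one_ne_zero)
  obtain ⟨d, hd, hdD, hζd⟩ := mem_rootsUpTo.1 hζ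
  obtain ⟨e, he, heD, hζe⟩ := mem_rootsUpTo.1 hζ'
  have hroot : (ζ / ζ') ^ (d * e) = 1 := by
    rw [div_pow, pow_mul, hζd, mul_comm d, pow_mul, hζe, one_pow, one_pow, div_one]
  have hde : ((d * e : ℕ) : ℝ) ≤ (D : ℝ) ^ 2 := by
    rw [sq]; exact_mod_cast Nat.mul_le_mul hdD heD
  have hpos : (0 : ℝ) < (d * e : ℕ) := by exact_mod_cast Nat.mul_pos hd he
  calc 4 / (D : ℝ) ^ 2 ≤ 4 / (d * e : ℕ) := by gcongr
    _ ≤ ‖ζ / ζ' - 1‖ := four_div_le_norm_sub_one (Nat.mul_pos hd he) hroot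
        fun h => hne ((div_eq_one_iff_eq hζ'0).1 h)
    _ = ‖ζ - ζ'‖ := by rw [div_sub_one hζ'0, norm_div, hnorm, div_one]

lemma sum_rootsUpTo_norm_geom_sum_le {N : ℕ} (hN : D ^ 4 ≤ N) (hω : ‖ω‖ = 1) :
    ∑ ζ ∈ rootsUpTo D, ‖∑ n ∈ range N, (ζ * ω) ^ n‖ ≤ 2 * N := by
  rcases D.eq_zero_or_pos with rfl | hD
  · simp [rootsUpTo]
  have hD' : (0 : ℝ) < D := by exact_mod_cast hD
  have hsep := sum_norm_geom_sum_le_of_separated (S := rootsUpTo D) (δ := 2 / (D : ℝ) ^ 2)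
    (by positivity) (fun ζ => norm_eq_one_of_mem_rootsUpTo) (fun ζ hζ ζ' hζ' hne => by
      rw [← mul_div_assoc]; norm_num; exact four_div_sq_le_norm_sub hζ hζ' hne) hω N
  have hcard : (#(rootsUpTo D) : ℝ) ≤ (D : ℝ) ^ 2 := by exact_mod_cast card_rootsUpTo_le D
  have hN' : (D : ℝ) ^ 4 ≤ N := by exact_mod_cast hN
  calc _ ≤ N + #(rootsUpTo D) * (2 / (2 / (D : ℝ) ^ 2)) := hsep
    _ = N + #(rootsUpTo D) * (D : ℝ) ^ 2 := by field_simp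
    _ ≤ N + (D : ℝ) ^ 2 * (D : ℝ) ^ 2 := by gcongr
    _ ≤ 2 * N := by linarith [hN', show (D : ℝ) ^ 2 * (D : ℝ) ^ 2 = (D : ℝ) ^ 4 by ring]

lemma mul_eq_sum_rootsUpTo (hM : 0 < M) (hφ : φ ∈ levelSpace M D) (n : ℕ) :
    (M : ℂ) * φ n = ∑ ζ ∈ rootsUpTo D with ζ ^ M = 1, expSum M φ ζ⁻¹ * ζ ^ n := by
  rw [mul_eq_sum_expSum_mul_pow hM (periodic_of_mem_levelSpace hφ) n]
  refine (sum_subset (fun ζ hζ => ?_) fun ζ hζ hζS => ?_).symm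
  · exact (mem_nthRootsFinset hM 1).2 (mem_filter.1 hζ).2
  · have hζM := (mem_nthRootsFinset hM 1).1 hζ
    rw [expSum_eq_zero_of_mem_levelSpace hφ (by rw [inv_pow, hζM, inv_one]), zero_mul]
    intro d hd hdD hζd
    rw [inv_pow, inv_eq_one] at hζd
    exact hζS (mem_filter.2 ⟨mem_rootsUpTo.2 ⟨d, hd, hdD, hζd⟩, hζM⟩)

/- `φ` has at most `D ^ 2` frequencies, spaced by at least about `1 / D ^ 2`; at all but one of them
the geometric sum is bounded by the inverse of the distance to `ω`, so they contribute `O(D ^ 4)`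
in total. -/
lemma norm_expSum_le_of_mem_levelSpace {N : ℕ} {B : ℝ} (hM : 0 < M) (hφ : φ ∈ levelSpace M D)
    (hN : D ^ 4 ≤ N) (hB : ∀ ζ : ℂ, ζ ^ M = 1 → ‖expSum M φ ζ‖ ≤ B * M) (hω : ‖ω‖ = 1) :
    ‖expSum N φ ω‖ ≤ 2 * B * N := by
  have hM' : (0 : ℝ) < M := by exact_mod_cast hM
  have hBM : 0 ≤ B * M := (norm_nonneg _).trans (hB 1 (one_pow M))
  have hexpand : (M : ℂ) * expSum N φ ω = ∑ ζ ∈ rootsUpTo D with ζ ^ M = 1,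
      expSum M φ ζ⁻¹ * ∑ n ∈ range N, (ζ * ω) ^ n := by
    conv_lhs => rw [expSum, mul_sum]
    simp only [← mul_assoc, mul_eq_sum_rootsUpTo hM hφ, sum_mul, mul_sum, mul_pow]
    exact sum_comm
  refine le_of_mul_le_mul_left ?_ hM'
  calc (M : ℝ) * ‖expSum N φ ω‖ = ‖(M : ℂ) * expSum N φ ω‖ := by
        rw [norm_mul, Complex.norm_natCast]
    _ ≤ ∑ ζ ∈ rootsUpTo D with ζ ^ M = 1, ‖expSum M φ ζ⁻¹‖ * ‖∑ n ∈ range N, (ζ * ω) ^ n‖ := by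
        rw [hexpand]
        exact (norm_sum_le _ _).trans_eq (sum_congr rfl fun ζ _ => norm_mul _ _)
    _ ≤ ∑ ζ ∈ rootsUpTo D with ζ ^ M = 1, B * M * ‖∑ n ∈ range N, (ζ * ω) ^ n‖ :=
        sum_le_sum fun ζ hζ => by
          gcongr
          exact hB _ (by rw [inv_pow, (mem_filter.1 hζ).2, inv_one])
    _ ≤ ∑ ζ ∈ rootsUpTo D, B * M * ‖∑ n ∈ range N, (ζ * ω) ^ n‖ :=
        sum_le_sum_of_subset_of_nonneg (filter_subset _ _) fun _ _ _ => by positivity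
    _ = B * M * ∑ ζ ∈ rootsUpTo D, ‖∑ n ∈ range N, (ζ * ω) ^ n‖ := (mul_sum ..).symm
    _ ≤ B * M * (2 * N) := by gcongr; exact sum_rootsUpTo_norm_geom_sum_le hN hω
    _ = M * (2 * B * N) := by ring

end LevelSpace

/-! ### Averages of divisibility conditions at a prime -/

section LocalFactor

variable {φ : ℕ → ℝ} {p u : ℕ}

lemma sum_range_mul_left_of_periodic (hφ : Function.Periodic φ u) (hpu : p.Coprime u) :
    ∑ m ∈ range u, φ (p * m) = ∑ m ∈ range u, φ m := by
  have hmaps : Set.MapsTo (fun m => p * m % u) (range u) (range u) := fun m hm => by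
    simpa using Nat.mod_lt _ (Nat.zero_lt_of_lt (mem_range.1 (mem_coe.1 hm)))
  have hinj : Set.InjOn (fun m => p * m % u) (range u) := fun a ha b hb hab =>
    (Nat.ModEq.cancel_left_of_coprime hpu.symm hab).eq_of_lt_of_lt
      (mem_range.1 (mem_coe.1 ha)) (mem_range.1 (mem_coe.1 hb))
  exact sum_nbij (fun m => p * m % u) hmaps hinj (surjOn_of_injOn_of_card_le _ hmaps hinj le_rfl)
    fun m _ => (hφ.map_mod_nat (p * m)).symm

lemma mul_sum_dvdIndicator_mul_of_periodic (hp : 0 < p) (hpu : p.Coprime u)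
    (hφ : Function.Periodic φ u) :
    p * ∑ n ∈ range (p * u), dvdIndicator p n * φ n = ∑ n ∈ range (p * u), φ n := by
  simp only [dvdIndicator, ite_mul, one_mul, zero_mul]
  rw [sum_range_mul_ite_dvd hp, sum_range_mul_left_of_periodic hφ hpu, mul_comm p u,
    sum_range_mul_of_periodic hφ]

lemma sum_add_mul_dvdIndicator_mul_of_periodic (hp : 0 < p) (hpu : p.Coprime u)
    (hφ : Function.Periodic φ u) (α β : ℝ) :
    ∑ n ∈ range (p * u), (α + β * dvdIndicator p n) * φ n =
      (α + β / p) * ∑ n ∈ range (p * u), φ n := by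
  have hp' : (p : ℝ) ≠ 0 := by exact_mod_cast hp.ne'
  simp only [add_mul, sum_add_distrib, mul_assoc, ← mul_sum]
  rw [← mul_sum_dvdIndicator_mul_of_periodic hp hpu hφ]
  field_simp

lemma norm_expSum_add_mul_dvdIndicator_mul_le {ω : ℂ} (hp : 0 < p) (hpu : p.Coprime u)
    (hφ : Function.Periodic φ u) (α β : ℝ) (hω : ω ^ (p * u) = 1) (hωu : ω ^ u ≠ 1) :
    ‖expSum (p * u) (fun n => (α + β * dvdIndicator p n) * φ n) ω‖ ≤
      |β| / p * ∑ n ∈ range (p * u), |φ n| := by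
  have hu : u ≠ 0 := by rintro rfl; exact hωu (pow_zero ω)
  have hp' : (p : ℝ) ≠ 0 := by exact_mod_cast hp.ne'
  have hnorm : ‖ω‖ = 1 := Complex.norm_eq_one_of_pow_eq_one hω (mul_ne_zero hp.ne' hu)
  have hsplit : (fun n => (α + β * dvdIndicator p n) * φ n) =
      α • φ + β • fun n => dvdIndicator p n * φ n := by
    funext n
    simp only [Pi.add_apply, Pi.smul_apply, smul_eq_mul]
    ring
  rw [hsplit, expSum_add, expSum_smul, expSum_smul,
    expSum_eq_zero_of_periodic hφ (dvd_mul_left u p) hω hωu, mul_zero, zero_add, norm_mul,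
    Complex.norm_real, Real.norm_eq_abs]
  calc |β| * ‖expSum (p * u) (fun n => dvdIndicator p n * φ n) ω‖
      ≤ |β| * ∑ n ∈ range (p * u), |dvdIndicator p n * φ n| := by
        gcongr; exact norm_expSum_le hnorm _ _
    _ = |β| * ∑ n ∈ range (p * u), dvdIndicator p n * |φ n| := by
        simp only [abs_mul, abs_of_nonneg (dvdIndicator_nonneg p _)]
    _ = |β| / p * ∑ n ∈ range (p * u), |φ n| := by
        rw [← mul_sum_dvdIndicator_mul_of_periodic (φ := fun n => |φ n|) hp hpu (hφ.comp abs)]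
        field_simp

end LocalFactor

/-! ### Selberg weights -/

section Selberg

variable {M p : ℕ} {A B : Finset ℕ} {𝒜 : Finset (Finset ℕ)}

/-- The function `-1` on multiples of `p` and `1 / (p - 1)` elsewhere: a multiple of the
Ramanujan sum modulo `p`, hence of mean zero. -/
noncomputable def selbergFactor (p n : ℕ) : ℝ := if p ∣ n then -1 else 1 / ((p : ℝ) - 1)

/-- The product of the functions `selbergFactor p` over `p ∈ A`. -/
noncomputable def selbergTerm (A : Finset ℕ) (n : ℕ) : ℝ := ∏ p ∈ A, selbergFactor p n

/-- The mean square `∏_{p ∈ A} 1 / (p - 1)` of `selbergTerm A`, which is also its value at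
integers coprime to `A`. -/
noncomputable def selbergCoeff (A : Finset ℕ) : ℝ := ∏ p ∈ A, 1 / ((p : ℝ) - 1)

/-- Selberg's optimal linear form for the family `𝒜` of sets of primes (a set `A` stands for the
squarefree integer `∏ A`). -/
noncomputable def selbergSum (𝒜 : Finset (Finset ℕ)) (n : ℕ) : ℝ := ∑ A ∈ 𝒜, selbergTerm A n

/-- Selberg's normalising constant, the sum of `1 / φ(∏ A)` over `A ∈ 𝒜`. -/
noncomputable def selbergMass (𝒜 : Finset (Finset ℕ)) : ℝ := ∑ A ∈ 𝒜, selbergCoeff A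

/-- The Selberg upper bound sieve weight of the family `𝒜`, normalised to have mean one. -/
noncomputable def selbergWeight (𝒜 : Finset (Finset ℕ)) (n : ℕ) : ℝ :=
  selbergSum 𝒜 n ^ 2 / selbergMass 𝒜

lemma sub_one_pos_of_prime (hp : p.Prime) : (0 : ℝ) < (p : ℝ) - 1 :=
  sub_pos.2 (by exact_mod_cast hp.one_lt)

lemma selbergFactor_eq (hp : p.Prime) (n : ℕ) :
    selbergFactor p n = 1 / ((p : ℝ) - 1) + -(p / ((p : ℝ) - 1)) * dvdIndicator p n := by
  have := sub_one_pos_of_prime hp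
  unfold selbergFactor dvdIndicator
  split_ifs
  · field_simp; ring
  · ring

lemma selbergFactor_sq_eq (p n : ℕ) : selbergFactor p n ^ 2 =
    1 / ((p : ℝ) - 1) ^ 2 + (1 - 1 / ((p : ℝ) - 1) ^ 2) * dvdIndicator p n := by
  unfold selbergFactor dvdIndicator
  split_ifs <;> simp

lemma selbergTerm_eq_mul_erase (hp : p ∈ A) (n : ℕ) :
    selbergTerm A n = selbergFactor p n * selbergTerm (A.erase p) n :=
  (mul_prod_erase A (selbergFactor · n) hp).symm

lemma selbergCoeff_nonneg (hA : ∀ p ∈ A, p.Prime) : 0 ≤ selbergCoeff A :=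
  prod_nonneg fun p hp => (one_div_pos.2 (sub_one_pos_of_prime (hA p hp))).le

lemma selbergTerm_periodic {u : ℕ} (hA : ∀ q ∈ A, q ∣ u) : Function.Periodic (selbergTerm A) u :=
  fun n => prod_congr rfl fun q hq => by simp only [selbergFactor, Nat.dvd_add_left (hA q hq)]

lemma selbergSum_periodic {u : ℕ} (h𝒜 : ∀ A ∈ 𝒜, ∀ q ∈ A, q ∣ u) :
    Function.Periodic (selbergSum 𝒜) u :=
  fun n => sum_congr rfl fun A hA => selbergTerm_periodic (h𝒜 A hA) n

lemma dvd_of_subset_primeFactors_mul {u : ℕ} (hp : p.Prime) (hA : A ⊆ (p * u).primeFactors)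
    (hpA : p ∉ A) : ∀ q ∈ A, q ∣ u := fun q hq => by
  have hq' := Nat.mem_primeFactors.1 (hA hq)
  refine (hq'.1.dvd_mul.1 hq'.2.1).resolve_left fun hqp => hpA ?_
  rwa [← (Nat.prime_dvd_prime_iff_eq hq'.1 hp).1 hqp]

lemma sum_selbergTerm_mul_eq_zero (hM : Squarefree M) (hA : A ⊆ M.primeFactors)
    (hB : B ⊆ M.primeFactors) (hpA : p ∈ A) (hpB : p ∉ B) :
    ∑ n ∈ range M, selbergTerm A n * selbergTerm B n = 0 := by
  have hp := Nat.prime_of_mem_primeFactors (hA hpA)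
  obtain ⟨u, rfl⟩ := Nat.dvd_of_mem_primeFactors (hA hpA)
  have hper : Function.Periodic (fun n => selbergTerm (A.erase p) n * selbergTerm B n) u :=
    (selbergTerm_periodic (dvd_of_subset_primeFactors_mul hp ((erase_subset p A).trans hA)
      (notMem_erase p A))).mul (selbergTerm_periodic (dvd_of_subset_primeFactors_mul hp hB hpB))
  have hmean : 1 / ((p : ℝ) - 1) + -(p / ((p : ℝ) - 1)) / p = 0 := by
    have := sub_one_pos_of_prime hp
    have : (p : ℝ) ≠ 0 := by exact_mod_cast hp.ne_zero
    field_simp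
    ring
  simp only [selbergTerm_eq_mul_erase hpA, mul_assoc, selbergFactor_eq hp]
  rw [sum_add_mul_dvdIndicator_mul_of_periodic hp.pos (Nat.coprime_of_squarefree_mul hM) hper,
    hmean, zero_mul]

lemma sum_selbergTerm_sq (hM : Squarefree M) (hA : A ⊆ M.primeFactors) :
    ∑ n ∈ range M, selbergTerm A n ^ 2 = M * selbergCoeff A := by
  induction A using Finset.induction_on with
  | empty => simp [selbergTerm, selbergCoeff]
  | insert p A hpA ih =>
    have hpM := hA (mem_insert_self p A)
    have hAM := (subset_insert p A).trans hA
    have hp := Nat.prime_of_mem_primeFactors hpM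
    obtain ⟨u, rfl⟩ := Nat.dvd_of_mem_primeFactors hpM
    have hper : Function.Periodic (fun n => selbergTerm A n ^ 2) u :=
      (selbergTerm_periodic (dvd_of_subset_primeFactors_mul hp hAM hpA)).comp (· ^ 2)
    have hmean : 1 / ((p : ℝ) - 1) ^ 2 + (1 - 1 / ((p : ℝ) - 1) ^ 2) / p = 1 / ((p : ℝ) - 1) := by
      have := sub_one_pos_of_prime hp
      have : (p : ℝ) ≠ 0 := by exact_mod_cast hp.ne_zero
      field_simp
      ring
    simp only [selbergTerm_eq_mul_erase (mem_insert_self p A), erase_insert hpA, mul_pow,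
      selbergFactor_sq_eq]
    rw [sum_add_mul_dvdIndicator_mul_of_periodic hp.pos (Nat.coprime_of_squarefree_mul hM) hper,
      hmean, ih hAM, selbergCoeff, selbergCoeff, prod_insert hpA]
    ring

lemma sum_selbergSum_sq (hM : Squarefree M) (h𝒜 : ∀ A ∈ 𝒜, A ⊆ M.primeFactors) :
    ∑ n ∈ range M, selbergSum 𝒜 n ^ 2 = M * selbergMass 𝒜 := by
  simp only [selbergSum, selbergMass, sq, sum_mul_sum]
  rw [sum_comm, mul_sum]
  refine sum_congr rfl fun A hA => ?_
  rw [sum_comm, sum_eq_single_of_mem A hA]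
  · simpa only [sq] using sum_selbergTerm_sq hM (h𝒜 A hA)
  · intro B hB hne
    obtain ⟨p, hp⟩ : ∃ p, p ∈ symmDiff A B := by
      rw [← Finset.Nonempty, nonempty_iff_ne_empty]
      exact fun h => hne (symmDiff_eq_bot.1 h).symm
    obtain ⟨hpA, hpB⟩ | ⟨hpB, hpA⟩ := mem_symmDiff.1 hp
    · exact sum_selbergTerm_mul_eq_zero hM (h𝒜 A hA) (h𝒜 B hB) hpA hpB
    · simpa only [mul_comm] using sum_selbergTerm_mul_eq_zero hM (h𝒜 B hB) (h𝒜 A hA) hpB hpA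

lemma selbergMass_mono {ℬ : Finset (Finset ℕ)} (h : ℬ ⊆ 𝒜) (h𝒜 : ∀ A ∈ 𝒜, ∀ p ∈ A, p.Prime) :
    selbergMass ℬ ≤ selbergMass 𝒜 :=
  sum_le_sum_of_subset_of_nonneg h fun A hA _ => selbergCoeff_nonneg (h𝒜 A hA)

lemma one_le_selbergMass (h𝒜 : ∀ A ∈ 𝒜, ∀ p ∈ A, p.Prime) (hempty : ∅ ∈ 𝒜) :
    1 ≤ selbergMass 𝒜 := by
  simpa [selbergMass, selbergCoeff] using
    selbergMass_mono (singleton_subset_iff.2 hempty) h𝒜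

lemma selbergSum_eq_add_mul (𝒜 : Finset (Finset ℕ)) (p n : ℕ) :
    selbergSum 𝒜 n = selbergSum (𝒜.nonMemberSubfamily p) n +
      selbergFactor p n * selbergSum (𝒜.memberSubfamily p) n := by
  have hinj : Set.InjOn (fun A : Finset ℕ => A.erase p) ↑(𝒜.filter (p ∈ ·)) :=
    fun A hA B hB hAB => by
      rw [← insert_erase (mem_filter.1 (mem_coe.1 hA)).2,
        ← insert_erase (mem_filter.1 (mem_coe.1 hB)).2]
      exact congrArg (insert p) hAB
  simp only [selbergSum, nonMemberSubfamily, memberSubfamily]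
  rw [sum_image hinj, mul_sum]
  rw [← sum_filter_add_sum_filter_not 𝒜 (p ∉ ·)]
  simp only [not_not]
  exact congrArg _ <| sum_congr rfl fun A hA => selbergTerm_eq_mul_erase (mem_filter.1 hA).2 n

lemma abs_coeff_selbergFactor_sq_le (hp : p.Prime) :
    |1 - 1 / ((p : ℝ) - 1) ^ 2| / p ≤ 1 / ((p : ℝ) - 1) := by
  have hp1 := sub_one_pos_of_prime hp
  have hp2 : (1 : ℝ) ≤ (p : ℝ) - 1 := by
    rw [le_sub_iff_add_le]
    exact_mod_cast hp.two_le
  have hle : 1 / ((p : ℝ) - 1) ^ 2 ≤ 1 := by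
    rw [div_le_one (by positivity)]
    nlinarith
  calc |1 - 1 / ((p : ℝ) - 1) ^ 2| / p ≤ 1 / (p : ℝ) := by
        gcongr
        rw [abs_of_nonneg (sub_nonneg.2 hle), sub_le_self_iff]
        positivity
    _ ≤ 1 / ((p : ℝ) - 1) := by gcongr; linarith

lemma abs_coeff_selbergFactor (hp : p.Prime) :
    |-(p / ((p : ℝ) - 1))| / p = 1 / ((p : ℝ) - 1) := by
  have hp1 := sub_one_pos_of_prime hp
  have hp0 : (0 : ℝ) < p := by exact_mod_cast hp.pos
  rw [abs_neg, abs_of_pos (by positivity)]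
  field_simp

lemma norm_expSum_add_selbergFactor_mul_sq_le {S₀ S₁ : ℕ → ℝ} {u : ℕ} {E : ℝ} {ω : ℂ}
    (hp : p.Prime) (hpu : p.Coprime u) (hper₀ : Function.Periodic S₀ u)
    (hper₁ : Function.Periodic S₁ u) (hE₀ : ∑ n ∈ range (p * u), S₀ n ^ 2 ≤ E)
    (hE₁ : ∑ n ∈ range (p * u), S₁ n ^ 2 ≤ E) (hω : ω ^ (p * u) = 1) (hωu : ω ^ u ≠ 1) :
    ‖expSum (p * u) (fun n => (S₀ n + selbergFactor p n * S₁ n) ^ 2) ω‖ ≤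
      3 / ((p : ℝ) - 1) * E := by
  have hp1 := sub_one_pos_of_prime hp
  have hcross : ∑ n ∈ range (p * u), |S₀ n * S₁ n| ≤ E := by
    have hle : ∀ n ∈ range (p * u), |S₀ n * S₁ n| ≤ (S₀ n ^ 2 + S₁ n ^ 2) / 2 := fun n _ => by
      rw [abs_mul, ← sq_abs (S₀ n), ← sq_abs (S₁ n)]
      linarith [two_mul_le_add_sq |S₀ n| |S₁ n|]
    have hsum := sum_le_sum hle
    rw [← sum_div, sum_add_distrib] at hsum
    linarith
  have hexpand : (fun n => (S₀ n + selbergFactor p n * S₁ n) ^ 2) = (fun n => S₀ n ^ 2) +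
      ((2 : ℝ) • (fun n => selbergFactor p n * (S₀ n * S₁ n)) +
        fun n => selbergFactor p n ^ 2 * S₁ n ^ 2) := by
    funext n
    simp only [Pi.add_apply, Pi.smul_apply, smul_eq_mul]
    ring
  have hlinear := norm_expSum_add_mul_dvdIndicator_mul_le hp.pos hpu (hper₀.mul hper₁)
    (1 / ((p : ℝ) - 1)) (-(p / ((p : ℝ) - 1))) hω hωu
  have hsquare := norm_expSum_add_mul_dvdIndicator_mul_le hp.pos hpu (hper₁.comp (· ^ 2))
    (1 / ((p : ℝ) - 1) ^ 2) (1 - 1 / ((p : ℝ) - 1) ^ 2) hω hωu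
  simp only [← selbergFactor_eq hp, ← selbergFactor_sq_eq, abs_coeff_selbergFactor hp,
    Function.comp_apply, Pi.mul_apply, abs_sq] at hlinear hsquare
  rw [hexpand, expSum_add, expSum_add, expSum_smul,
    expSum_eq_zero_of_periodic (φ := fun n => S₀ n ^ 2) (hper₀.comp (· ^ 2))
      (dvd_mul_left u p) hω hωu, zero_add]
  calc _ ≤ ‖((2 : ℝ) : ℂ) * expSum (p * u) (fun n => selbergFactor p n * (S₀ n * S₁ n)) ω‖ +
        ‖expSum (p * u) (fun n => selbergFactor p n ^ 2 * S₁ n ^ 2) ω‖ := norm_add_le _ _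
    _ ≤ 2 * (1 / ((p : ℝ) - 1) * E) + 1 / ((p : ℝ) - 1) * E := by
        rw [norm_mul, Complex.norm_real, Real.norm_ofNat]
        gcongr
        · exact hlinear.trans (by gcongr)
        · exact hsquare.trans (mul_le_mul (abs_coeff_selbergFactor_sq_le hp) hE₁
            (sum_nonneg fun _ _ => sq_nonneg _) (by positivity))
    _ = 3 / ((p : ℝ) - 1) * E := by ring

lemma norm_expSum_selbergSum_sq_le {ω : ℂ} (hM : Squarefree M)
    (h𝒜 : ∀ A ∈ 𝒜, A ⊆ M.primeFactors) (hlower : IsLowerSet (𝒜 : Set (Finset ℕ)))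
    (hp : p ∈ M.primeFactors) (hω : ω ^ M = 1) (hωp : ω ^ (M / p) ≠ 1) :
    ‖expSum M (fun n => selbergSum 𝒜 n ^ 2) ω‖ ≤ 3 / ((p : ℝ) - 1) * (M * selbergMass 𝒜) := by
  have hp' := Nat.prime_of_mem_primeFactors hp
  obtain ⟨u, rfl⟩ := Nat.dvd_of_mem_primeFactors hp
  rw [Nat.mul_div_cancel_left u hp'.pos] at hωp
  have hsub₀ : 𝒜.nonMemberSubfamily p ⊆ 𝒜 := filter_subset _ _
  have hsub₁ : 𝒜.memberSubfamily p ⊆ 𝒜 :=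
    hlower.memberSubfamily_subset_nonMemberSubfamily.trans hsub₀
  have hmean {ℬ : Finset (Finset ℕ)} (hℬ : ℬ ⊆ 𝒜) :
      ∑ n ∈ range (p * u), selbergSum ℬ n ^ 2 ≤ (p * u : ℕ) * selbergMass 𝒜 := by
    rw [sum_selbergSum_sq hM fun A hA => h𝒜 A (hℬ hA)]
    gcongr
    exact selbergMass_mono hℬ fun A hA q hq => Nat.prime_of_mem_primeFactors (h𝒜 A hA hq)
  simp only [selbergSum_eq_add_mul 𝒜 p]
  exact norm_expSum_add_selbergFactor_mul_sq_le hp' (Nat.coprime_of_squarefree_mul hM)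
    (selbergSum_periodic fun A hA =>
      dvd_of_subset_primeFactors_mul hp' (h𝒜 A (hsub₀ hA)) (mem_nonMemberSubfamily.1 hA).2)
    (selbergSum_periodic fun A hA =>
      dvd_of_subset_primeFactors_mul hp' (h𝒜 A (hsub₁ hA)) (mem_memberSubfamily.1 hA).2)
    (hmean hsub₀) (hmean hsub₁) hω hωp

lemma sum_selbergWeight (hM : Squarefree M) (h𝒜 : ∀ A ∈ 𝒜, A ⊆ M.primeFactors)
    (hempty : ∅ ∈ 𝒜) : ∑ n ∈ range M, selbergWeight 𝒜 n = M := by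
  have := one_le_selbergMass (fun A hA q hq => Nat.prime_of_mem_primeFactors (h𝒜 A hA hq)) hempty
  simp only [selbergWeight]
  rw [← sum_div, sum_selbergSum_sq hM h𝒜]
  field_simp

lemma exists_mem_primeFactors_pow_div_ne_one {ω : ℂ} (hM : Squarefree M) (hω : ω ^ M = 1)
    (hω1 : ω ≠ 1) : ∃ p ∈ M.primeFactors, ω ^ (M / p) ≠ 1 := by
  obtain ⟨p, hp, hpω⟩ := Nat.exists_prime_and_dvd (mt orderOf_eq_one_iff.1 hω1)
  have hpM : p ∣ M := hpω.trans (orderOf_dvd_of_pow_eq_one hω)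
  refine ⟨p, Nat.mem_primeFactors.2 ⟨hp, hpM, hM.ne_zero⟩, fun h => hp.not_isUnit (hM p ?_)⟩
  exact (Nat.dvd_div_iff_mul_dvd hpM).1 (hpω.trans (orderOf_dvd_of_pow_eq_one h))

lemma norm_expSum_selbergWeight_sub_one_le {Z : ℕ} {ω : ℂ} (hM : Squarefree M)
    (h𝒜 : ∀ A ∈ 𝒜, A ⊆ M.primeFactors) (hlower : IsLowerSet (𝒜 : Set (Finset ℕ)))
    (hempty : ∅ ∈ 𝒜) (hZ : 0 < Z) (hZ𝒜 : ∀ A ∈ 𝒜, ∀ p ∈ A, Z < p) (hω : ω ^ M = 1) :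
    ‖expSum M (selbergWeight 𝒜 - 1) ω‖ ≤ 3 / Z * M := by
  have hmass := one_le_selbergMass
    (fun A hA q hq => Nat.prime_of_mem_primeFactors (h𝒜 A hA hq)) hempty
  by_cases hω1 : ω = 1
  · subst hω1
    rw [expSum_sub, expSum_one, expSum_one, sum_selbergWeight hM h𝒜 hempty]
    simp only [Pi.one_apply, sum_const, card_range, nsmul_one, sub_self, norm_zero]
    positivity
  obtain ⟨p, hpM, hωp⟩ := exists_mem_primeFactors_pow_div_ne_one hM hω hω1
  have hp := Nat.prime_of_mem_primeFactors hpM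
  have hweight : selbergWeight 𝒜 = (selbergMass 𝒜)⁻¹ • fun n => selbergSum 𝒜 n ^ 2 := by
    funext n
    simp only [selbergWeight, Pi.smul_apply, smul_eq_mul, div_eq_inv_mul]
  have hone : expSum M 1 ω = 0 := expSum_eq_zero_of_periodic (u := 1) (fun _ => rfl)
    (one_dvd M) hω (by rwa [pow_one])
  rw [expSum_sub, hone, sub_zero, hweight, expSum_smul, norm_mul, Complex.norm_real,
    Real.norm_of_nonneg (by positivity)]
  by_cases hpZ : Z < p
  · have hZp : (Z : ℝ) ≤ (p : ℝ) - 1 := by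
      rw [le_sub_iff_add_le]
      exact_mod_cast hpZ
    calc _ ≤ (selbergMass 𝒜)⁻¹ * (3 / ((p : ℝ) - 1) * (M * selbergMass 𝒜)) := by
          gcongr
          exact norm_expSum_selbergSum_sq_le hM h𝒜 hlower hpM hω hωp
      _ = 3 / ((p : ℝ) - 1) * M := by field_simp
      _ ≤ 3 / Z * M := by gcongr
  · have hMp : p * (M / p) = M := Nat.mul_div_cancel' (Nat.dvd_of_mem_primeFactors hpM)
    have hper : Function.Periodic (selbergSum 𝒜) (M / p) := selbergSum_periodic fun A hA =>
      dvd_of_subset_primeFactors_mul hp (by rw [hMp]; exact h𝒜 A hA) fun hpA => hpZ (hZ𝒜 A hA p hpA)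
    rw [expSum_eq_zero_of_periodic (φ := fun n => selbergSum 𝒜 n ^ 2) (hper.comp (· ^ 2))
      ⟨p, by rw [mul_comm, hMp]⟩ hω hωp,
      norm_zero, mul_zero]
    positivity

lemma selbergWeight_nonneg (h𝒜 : ∀ A ∈ 𝒜, ∀ p ∈ A, p.Prime) (n : ℕ) :
    0 ≤ selbergWeight 𝒜 n :=
  div_nonneg (sq_nonneg _) (sum_nonneg fun A hA => selbergCoeff_nonneg (h𝒜 A hA))

lemma selbergWeight_mul_left {d : ℕ} (hd : ∀ A ∈ 𝒜, ∀ p ∈ A, p.Coprime d) (m : ℕ) :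
    selbergWeight 𝒜 (d * m) = selbergWeight 𝒜 m := by
  have hsum : selbergSum 𝒜 (d * m) = selbergSum 𝒜 m :=
    sum_congr rfl fun A hA => prod_congr rfl fun p hp => by
      simp only [selbergFactor, (hd A hA p hp).dvd_mul_left]
  rw [selbergWeight, selbergWeight, hsum]

lemma selbergWeight_of_coprime {n : ℕ} (hn : ∀ A ∈ 𝒜, ∀ p ∈ A, ¬ p ∣ n) :
    selbergWeight 𝒜 n = selbergMass 𝒜 := by
  have hsum : selbergSum 𝒜 n = selbergMass 𝒜 :=
    sum_congr rfl fun A hA => prod_congr rfl fun p hp => if_neg (hn A hA p hp)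
  rw [selbergWeight, hsum, sq, mul_self_div_self]

lemma selbergTerm_mem_levelSpace (hA : A ⊆ M.primeFactors) :
    selbergTerm A ∈ levelSpace M (∏ p ∈ A, p) := by
  induction A using Finset.induction_on with
  | empty =>
    have hone : selbergTerm ∅ = 1 := by funext _; simp [selbergTerm]
    exact hone ▸ one_mem_levelSpace (by simp)
  | insert p A hpA ih =>
    have hpM := hA (mem_insert_self p A)
    have hp := Nat.prime_of_mem_primeFactors hpM
    have hterm : selbergTerm (insert p A) = selbergFactor p * selbergTerm A := by
      funext n; simp [selbergTerm, prod_insert hpA]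
    have hfactor : selbergFactor p =
        (1 / ((p : ℝ) - 1)) • 1 + (-(p / ((p : ℝ) - 1))) • dvdIndicator p := by
      funext n; simp [selbergFactor_eq hp]
    rw [hterm, prod_insert hpA]
    refine mul_mem_levelSpace ?_ (ih ((subset_insert p A).trans hA))
    rw [hfactor]
    exact add_mem (Submodule.smul_mem _ _ (one_mem_levelSpace hp.pos)) (Submodule.smul_mem _ _
      (dvdIndicator_mem_levelSpace (Nat.dvd_of_mem_primeFactors hpM) hp.pos le_rfl))

lemma selbergWeight_mem_levelSpace {R : ℕ} (h𝒜 : ∀ A ∈ 𝒜, A ⊆ M.primeFactors)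
    (hR : ∀ A ∈ 𝒜, ∏ p ∈ A, p ≤ R) : selbergWeight 𝒜 ∈ levelSpace M (R * R) := by
  have hsum : selbergSum 𝒜 ∈ levelSpace M R := by
    have : selbergSum 𝒜 = ∑ A ∈ 𝒜, selbergTerm A := by funext n; simp [selbergSum]
    exact this ▸ Submodule.sum_mem _ fun A hA =>
      levelSpace_mono (hR A hA) (selbergTerm_mem_levelSpace (h𝒜 A hA))
  have hweight : selbergWeight 𝒜 = (selbergMass 𝒜)⁻¹ • (selbergSum 𝒜 * selbergSum 𝒜) := by
    funext n
    simp only [selbergWeight, Pi.smul_apply, Pi.mul_apply, smul_eq_mul, div_eq_inv_mul, sq]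
  exact hweight ▸ Submodule.smul_mem _ _ (mul_mem_levelSpace hsum hsum)

end Selberg

/-! ### Bonferroni inequalities -/

section Bonferroni

variable {ι : Type*} {P : Finset ι} {x : ι → ℝ}

/-- The `i`-th elementary symmetric polynomial of the family `x p`, `p ∈ P`. -/
def elemSymm (P : Finset ι) (x : ι → ℝ) (i : ℕ) : ℝ := ∑ A ∈ powersetCard i P, ∏ p ∈ A, x p

@[simp] lemma elemSymm_zero (P : Finset ι) (x : ι → ℝ) : elemSymm P x 0 = 1 := by simp [elemSymm]

lemma elemSymm_nonneg (hx : ∀ p ∈ P, 0 ≤ x p) (i : ℕ) : 0 ≤ elemSymm P x i :=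
  sum_nonneg fun _ hA => prod_nonneg fun p hp => hx p ((mem_powersetCard.1 hA).1 hp)

lemma elemSymm_eq_zero_of_card_lt {i : ℕ} (hi : #P < i) : elemSymm P x i = 0 := by
  rw [elemSymm, powersetCard_eq_empty.2 hi, sum_empty]

lemma elemSymm_mul_left (c : ℝ) (i : ℕ) :
    elemSymm P (fun p => c * x p) i = c ^ i * elemSymm P x i := by
  rw [elemSymm, elemSymm, mul_sum]
  refine sum_congr rfl fun A hA => ?_
  rw [prod_mul_distrib, prod_const, (mem_powersetCard.1 hA).2]

lemma elemSymm_insert [DecidableEq ι] {q : ι} (hq : q ∉ P) (i : ℕ) :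
    elemSymm (insert q P) x (i + 1) = elemSymm P x (i + 1) + x q * elemSymm P x i := by
  have hnotMem {j : ℕ} {A : Finset ι} (hA : A ∈ powersetCard j P) : q ∉ A :=
    fun h => hq ((mem_powersetCard.1 hA).1 h)
  have hdisj : Disjoint (powersetCard (i + 1) P) ((powersetCard i P).image (insert q)) := by
    rw [disjoint_right]
    intro A hA hA'
    obtain ⟨B, -, rfl⟩ := mem_image.1 hA
    exact hnotMem hA' (mem_insert_self q B)
  have hinj : Set.InjOn (insert q) (powersetCard i P : Set (Finset ι)) := fun A hA B hB hAB => by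
    rw [← erase_insert (hnotMem hA), hAB, erase_insert (hnotMem hB)]
  rw [elemSymm, powersetCard_succ_insert hq, sum_union hdisj, sum_image hinj]
  simp only [elemSymm, mul_sum]
  congr 1
  exact sum_congr rfl fun A hA => prod_insert (hnotMem hA)

lemma sum_elemSymm_le_prod_one_add (hx : ∀ p ∈ P, 0 ≤ x p) (t : ℕ) :
    ∑ i ∈ range t, elemSymm P x i ≤ ∏ p ∈ P, (1 + x p) := by
  classical
  rw [prod_one_add, sum_powerset]
  rcases le_total t (#P + 1) with h | h
  · exact sum_le_sum_of_subset_of_nonneg (range_mono h) fun i _ _ => elemSymm_nonneg hx i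
  · refine (sum_subset (range_mono h) fun i _ hi => elemSymm_eq_zero_of_card_lt ?_).ge
    rw [mem_range] at hi
    omega

lemma sum_neg_one_pow_mul_elemSymm_insert [DecidableEq ι] {q : ι} (hq : q ∉ P) (t : ℕ) :
    ∑ i ∈ range (t + 1), (-1) ^ i * elemSymm (insert q P) x i =
      ∑ i ∈ range (t + 1), (-1) ^ i * elemSymm P x i -
        x q * ∑ i ∈ range t, (-1) ^ i * elemSymm P x i := by
  rw [sum_range_succ', sum_range_succ' (fun i => (-1) ^ i * elemSymm P x i), mul_sum,
    add_sub_right_comm, ← sum_sub_distrib]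
  simp only [elemSymm_insert hq, elemSymm_zero]
  congr 1
  exact sum_congr rfl fun i _ => by ring

lemma abs_prod_one_sub_sub_sum_elemSymm_le (hx : ∀ p ∈ P, x p ∈ Set.Icc (0 : ℝ) 1) (t : ℕ) :
    |∏ p ∈ P, (1 - x p) - ∑ i ∈ range t, (-1) ^ i * elemSymm P x i| ≤ elemSymm P x t := by
  classical
  induction P using Finset.induction_on generalizing t with
  | empty =>
    cases t with
    | zero => simp [elemSymm]
    | succ t =>
      have hsucc (i : ℕ) : elemSymm ∅ x (i + 1) = 0 := elemSymm_eq_zero_of_card_lt (by simp)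
      rw [sum_range_succ']
      simp [hsucc]
  | insert q P hq ih =>
    have hxq := hx q (mem_insert_self q P)
    have hxP : ∀ p ∈ P, x p ∈ Set.Icc (0 : ℝ) 1 := fun p hp => hx p (mem_insert_of_mem hp)
    cases t with
    | zero =>
      rw [range_zero, sum_empty, sub_zero, elemSymm_zero,
        abs_of_nonneg (prod_nonneg fun p hp => sub_nonneg.2 (hx p hp).2)]
      exact prod_le_one (fun p hp => sub_nonneg.2 (hx p hp).2)
        fun p hp => sub_le_self _ (hx p hp).1
    | succ t =>
      rw [prod_insert hq, elemSymm_insert hq, sum_neg_one_pow_mul_elemSymm_insert hq]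
      calc _ = |(∏ p ∈ P, (1 - x p) - ∑ i ∈ range (t + 1), (-1) ^ i * elemSymm P x i) -
              x q * (∏ p ∈ P, (1 - x p) - ∑ i ∈ range t, (-1) ^ i * elemSymm P x i)| := by
            congr 1; ring
        _ ≤ elemSymm P x (t + 1) + x q * elemSymm P x t := by
            refine (abs_sub _ _).trans (add_le_add (ih hxP _) ?_)
            rw [abs_mul, abs_of_nonneg hxq.1]
            exact mul_le_mul_of_nonneg_left (ih hxP t) hxq.1

end Bonferroni

/-! ### Sifted Selberg weights -/

section FundamentalLemma

variable {P : Finset ℕ} {M : ℕ} {ω : ℂ}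

/-- The product `∏ (1 - 1/p)⁻¹` over `p ∈ P`. -/
noncomputable def mertensProd (P : Finset ℕ) : ℝ := ∏ p ∈ P, (p : ℝ) / ((p : ℝ) - 1)

lemma one_le_mertensProd (hP : ∀ p ∈ P, p.Prime) : 1 ≤ mertensProd P :=
  one_le_prod fun p hp => by
    rw [one_le_div (sub_one_pos_of_prime (hP p hp))]
    exact sub_le_self _ zero_le_one

lemma prod_one_add_inv_le_mertensProd (hP : ∀ p ∈ P, p.Prime) :
    ∏ p ∈ P, (1 + (p : ℝ)⁻¹) ≤ mertensProd P :=
  prod_le_prod (fun _ _ => by positivity) fun p hp => by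
    have hp1 := sub_one_pos_of_prime (hP p hp)
    have hp0 : (0 : ℝ) < p := by exact_mod_cast (hP p hp).pos
    rw [le_div_iff₀ hp1]
    field_simp
    nlinarith

lemma elemSymm_inv_le (hP : ∀ p ∈ P, p.Prime) (t : ℕ) :
    elemSymm P (fun p => (p : ℝ)⁻¹) t ≤ mertensProd P ^ 16 / 16 ^ t := by
  rw [le_div_iff₀' (by positivity), ← elemSymm_mul_left]
  calc elemSymm P (fun p => 16 * (p : ℝ)⁻¹) t
      ≤ ∑ i ∈ range (t + 1), elemSymm P (fun p => 16 * (p : ℝ)⁻¹) i :=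
        single_le_sum (f := elemSymm P _) (fun i _ => elemSymm_nonneg (fun p _ => by positivity) i)
          (self_mem_range_succ t)
    _ ≤ ∏ p ∈ P, (1 + 16 * (p : ℝ)⁻¹) := sum_elemSymm_le_prod_one_add (fun p _ => by positivity) _
    _ ≤ ∏ p ∈ P, (1 + (p : ℝ)⁻¹) ^ 16 := by
        refine prod_le_prod (fun p _ => by positivity) fun p _ => ?_
        have hinv : (0 : ℝ) ≤ (p : ℝ)⁻¹ := by positivity
        exact_mod_cast one_add_mul_le_pow (by linarith : -2 ≤ (p : ℝ)⁻¹) 16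
    _ ≤ mertensProd P ^ 16 := by
        rw [prod_pow]
        exact pow_le_pow_left₀ (prod_nonneg fun p _ => by positivity)
          (prod_one_add_inv_le_mertensProd hP) 16

lemma prod_dvd_of_subset_primeFactors (hP : P ⊆ M.primeFactors) : ∏ p ∈ P, p ∣ M :=
  prod_primes_dvd M (fun _ hp => (Nat.prime_of_mem_primeFactors (hP hp)).prime)
    fun _ hp => Nat.dvd_of_mem_primeFactors (hP hp)

lemma prod_dvdIndicator (hP : ∀ p ∈ P, p.Prime) (n : ℕ) :
    ∏ p ∈ P, dvdIndicator p n = dvdIndicator (∏ p ∈ P, p) n := by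
  simp only [dvdIndicator, prod_ite_zero, prod_const_one]
  refine if_congr ⟨fun h => ?_, fun h p hp => (dvd_prod_of_mem _ hp).trans h⟩ rfl rfl
  exact prod_primes_dvd n (fun p hp => (hP p hp).prime) h

lemma dvdIndicator_mem_Icc (d n : ℕ) : dvdIndicator d n ∈ Set.Icc (0 : ℝ) 1 := by
  unfold dvdIndicator; split_ifs <;> norm_num

lemma expSum_sum {ι : Type*} (s : Finset ι) (N : ℕ) (φ : ι → ℕ → ℝ) (ω : ℂ) :
    expSum N (∑ i ∈ s, φ i) ω = ∑ i ∈ s, expSum N (φ i) ω := by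
  simp only [expSum, Finset.sum_apply, Complex.ofReal_sum, sum_mul]
  exact sum_comm

lemma norm_expSum_dvdIndicator_mul_le {d : ℕ} {f : ℕ → ℝ} {κ : ℝ} (hd : 0 < d) (hdM : d ∣ M)
    (hf : ∀ m, f (d * m) = f m)
    (hκ : ∀ ζ : ℂ, ζ ^ (M / d) = 1 → ‖expSum (M / d) f ζ‖ ≤ κ * (M / d : ℕ)) (hω : ω ^ M = 1) :
    ‖expSum M (dvdIndicator d * f) ω‖ ≤ κ * (d : ℝ)⁻¹ * M := by
  obtain ⟨u, rfl⟩ := hdM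
  rw [Nat.mul_div_cancel_left u hd] at hκ
  have hred : expSum (d * u) (dvdIndicator d * f) ω = expSum u f (ω ^ d) := by
    rw [expSum, expSum]
    convert sum_range_mul_ite_dvd hd u fun n => (f n : ℂ) * ω ^ n using 2 with n _ m _
    · simp only [dvdIndicator, Pi.mul_apply]
      split_ifs <;> simp
    · rw [hf, pow_mul]
  rw [hred]
  refine (hκ _ (by rw [← pow_mul, hω])).trans_eq ?_
  have : (d : ℝ) ≠ 0 := by exact_mod_cast hd.ne'
  push_cast
  field_simp

lemma norm_expSum_elemSymm_mul_le {f : ℕ → ℝ} {κ : ℝ} {R D N i : ℕ} (hM : 0 < M)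
    (hP : P ⊆ M.primeFactors) (hf : f ∈ levelSpace M R)
    (hfP : ∀ A ⊆ P, ∀ m, f ((∏ p ∈ A, p) * m) = f m)
    (hκ : ∀ A ⊆ P, ∀ ζ : ℂ, ζ ^ (M / ∏ p ∈ A, p) = 1 →
      ‖expSum (M / ∏ p ∈ A, p) f ζ‖ ≤ κ * (M / ∏ p ∈ A, p : ℕ))
    (hD : ∀ A ∈ powersetCard i P, ∏ p ∈ A, p ≤ D) (hN : (D * R) ^ 4 ≤ N) (hω : ‖ω‖ = 1) :
    ‖expSum N (fun n => elemSymm P (fun p => dvdIndicator p n) i * f n) ω‖ ≤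
      2 * (κ * elemSymm P (fun p => (p : ℝ)⁻¹) i) * N := by
  have hprime {A : Finset ℕ} (hA : A ⊆ P) : ∀ p ∈ A, p.Prime :=
    fun p hp => Nat.prime_of_mem_primeFactors (hP (hA hp))
  have hpos {A : Finset ℕ} (hA : A ⊆ P) : 0 < ∏ p ∈ A, p :=
    prod_pos fun p hp => (hprime hA p hp).pos
  have hdvd {A : Finset ℕ} (hA : A ⊆ P) : ∏ p ∈ A, p ∣ M :=
    prod_dvd_of_subset_primeFactors (hA.trans hP)
  have hsum : (fun n => elemSymm P (fun p => dvdIndicator p n) i * f n) =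
      ∑ A ∈ powersetCard i P, dvdIndicator (∏ p ∈ A, p) * f := by
    funext n
    simp only [elemSymm, Finset.sum_apply, Pi.mul_apply, sum_mul]
    exact sum_congr rfl fun A hA => by
      rw [prod_dvdIndicator (hprime (mem_powersetCard.1 hA).1)]
  rw [hsum]
  refine norm_expSum_le_of_mem_levelSpace hM (Submodule.sum_mem _ fun A hA => ?_) hN
    (fun ζ hζ => ?_) hω
  · have hAP := (mem_powersetCard.1 hA).1
    exact mul_mem_levelSpace (dvdIndicator_mem_levelSpace (hdvd hAP) (hpos hAP) (hD A hA)) hf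
  · rw [expSum_sum, elemSymm, mul_sum, sum_mul]
    refine norm_sum_le_of_le _ fun A hA => ?_
    have hAP := (mem_powersetCard.1 hA).1
    rw [prod_inv_distrib, ← Nat.cast_prod]
    exact norm_expSum_dvdIndicator_mul_le (hpos hAP) (hdvd hAP) (hfP A hAP) (hκ A hAP) hζ

/-- The indicator of the integers coprime to all `p ∈ P`, normalised to have mean value one. -/
noncomputable def coprimeWeight (P : Finset ℕ) (n : ℕ) : ℝ :=
  mertensProd P * ∏ p ∈ P, (1 - dvdIndicator p n)

variable {𝒜 : Finset (Finset ℕ)}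

lemma selbergWeight_prod_mul (hP : P ⊆ M.primeFactors)
    (h𝒜 : ∀ A ∈ 𝒜, A ⊆ M.primeFactors \ P) {A : Finset ℕ} (hA : A ⊆ P) (m : ℕ) :
    selbergWeight 𝒜 ((∏ p ∈ A, p) * m) = selbergWeight 𝒜 m := by
  refine selbergWeight_mul_left (fun B hB p hp => Nat.Coprime.prod_right fun q hq => ?_) m
  obtain ⟨hpM, hpP⟩ := mem_sdiff.1 (h𝒜 B hB hp)
  exact (Nat.coprime_primes (Nat.prime_of_mem_primeFactors hpM)
    (Nat.prime_of_mem_primeFactors (hP (hA hq)))).2 (ne_of_mem_of_not_mem (hA hq) hpP).symm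

lemma subset_primeFactors_div_prod (hM : M ≠ 0) (hP : P ⊆ M.primeFactors)
    {A B : Finset ℕ} (hA : A ⊆ P) (hB : B ⊆ M.primeFactors \ P) :
    B ⊆ (M / ∏ p ∈ A, p).primeFactors := by
  intro p hp
  obtain ⟨hpM, hpP⟩ := mem_sdiff.1 (hB hp)
  have hprime := Nat.prime_of_mem_primeFactors hpM
  have hdvd := prod_dvd_of_subset_primeFactors (hA.trans hP)
  have hcop : p.Coprime (∏ q ∈ A, q) := Nat.Coprime.prod_right fun q hq =>
    (Nat.coprime_primes hprime (Nat.prime_of_mem_primeFactors (hP (hA hq)))).2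
      (ne_of_mem_of_not_mem (hA hq) hpP).symm
  refine Nat.mem_primeFactors.2 ⟨hprime, hcop.dvd_of_dvd_mul_left ?_,
    (Nat.div_ne_zero_iff_of_dvd hdvd).2 ⟨hM, ne_zero_of_dvd_ne_zero hM hdvd⟩⟩
  rw [Nat.mul_div_cancel' hdvd]
  exact Nat.dvd_of_mem_primeFactors hpM

lemma norm_expSum_coprimeWeight_mul_le_of_elemSymm (hP : ∀ p ∈ P, p.Prime) {f h b : ℕ → ℝ}
    {N t : ℕ} {c : ℝ} (hω : ‖ω‖ = 1) (hfh : ∀ n, |f n| ≤ h n)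
    (hb : ∀ i ∈ range t,
      ‖expSum N (fun n => elemSymm P (fun p => dvdIndicator p n) i * f n) ω‖ ≤ b i)
    (hc : ‖expSum N (fun n => elemSymm P (fun p => dvdIndicator p n) t * h n) 1‖ ≤ c) :
    ‖expSum N (coprimeWeight P * f) ω‖ ≤ mertensProd P * (∑ i ∈ range t, b i + c) := by
  set e : ℕ → ℕ → ℝ := fun i n => elemSymm P (fun p => dvdIndicator p n) i
  set r : ℕ → ℝ := fun n =>
    (∏ p ∈ P, (1 - dvdIndicator p n) - ∑ i ∈ range t, (-1) ^ i * e i n) * f n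
  have hdecomp : coprimeWeight P * f =
      mertensProd P • (∑ i ∈ range t, (-1 : ℝ) ^ i • (fun n => e i n * f n) + r) := by
    funext n
    simp only [coprimeWeight, r, Pi.mul_apply, Pi.smul_apply, Pi.add_apply, Finset.sum_apply,
      smul_eq_mul, sub_mul, sum_mul, mul_assoc, add_sub_cancel]
  have hr : ‖expSum N r ω‖ ≤ c := calc
    ‖expSum N r ω‖ ≤ ∑ n ∈ range N, |r n| := norm_expSum_le hω N r
    _ ≤ ∑ n ∈ range N, e t n * h n := sum_le_sum fun n _ => by
        have hbonf := abs_prod_one_sub_sub_sum_elemSymm_le (P := P)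
          (fun p _ => dvdIndicator_mem_Icc p n) t
        rw [abs_mul]
        exact mul_le_mul hbonf (hfh n) (abs_nonneg _) ((abs_nonneg _).trans hbonf)
    _ ≤ ‖((∑ n ∈ range N, e t n * h n : ℝ) : ℂ)‖ := by
        rw [Complex.norm_real]; exact le_abs_self _
    _ ≤ c := by simpa [expSum, e] using hc
  rw [hdecomp, expSum_smul, expSum_add, expSum_sum, norm_mul, Complex.norm_real,
    Real.norm_of_nonneg (zero_le_one.trans (one_le_mertensProd hP))]
  refine mul_le_mul_of_nonneg_left ((norm_add_le _ _).trans (add_le_add ?_ hr))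
    (zero_le_one.trans (one_le_mertensProd hP))
  refine norm_sum_le_of_le _ fun i hi => ?_
  rw [expSum_smul, norm_mul, Complex.norm_real, norm_pow, norm_neg, norm_one, one_pow, one_mul]
  exact hb i hi

lemma norm_expSum_selbergWeight_add_one_le (hM : Squarefree M)
    (h𝒜 : ∀ A ∈ 𝒜, A ⊆ M.primeFactors) (hempty : ∅ ∈ 𝒜) (hω : ‖ω‖ = 1) :
    ‖expSum M (selbergWeight 𝒜 + 1) ω‖ ≤ 2 * M := by
  refine (norm_expSum_le hω M _).trans_eq ?_
  have hnonneg (n : ℕ) : |(selbergWeight 𝒜 + 1) n| = selbergWeight 𝒜 n + 1 :=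
    abs_of_nonneg (add_nonneg (selbergWeight_nonneg
      (fun A hA p hp => Nat.prime_of_mem_primeFactors (h𝒜 A hA hp)) n) zero_le_one)
  simp only [hnonneg, sum_add_distrib, sum_selbergWeight hM h𝒜 hempty, sum_const, card_range,
    nsmul_one]
  ring

/-- The sieving sets of primes `A ⊆ (Z, ∞)` admitted in a Selberg weight of level `R` supported
on `M`, away from the primes in `P`. -/
structure IsSievingFamily (M : ℕ) (P : Finset ℕ) (Z R : ℕ) (𝒜 : Finset (Finset ℕ)) : Prop where
  empty_mem : ∅ ∈ 𝒜
  isLowerSet : IsLowerSet (𝒜 : Set (Finset ℕ))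
  subset : ∀ A ∈ 𝒜, A ⊆ M.primeFactors \ P
  lt : ∀ A ∈ 𝒜, ∀ p ∈ A, Z < p
  prod_le : ∀ A ∈ 𝒜, ∏ p ∈ A, p ≤ R

lemma norm_expSum_coprimeWeight_mul_le {Z R D N t : ℕ} (hM : Squarefree M)
    (hP : P ⊆ M.primeFactors) (h𝒜 : IsSievingFamily M P Z R 𝒜) (hZ : 0 < Z)
    (hD : ∀ A ⊆ P, #A ≤ t → ∏ p ∈ A, p ≤ D) (hN : (D * (R * R)) ^ 4 ≤ N) (hω : ‖ω‖ = 1) :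
    ‖expSum N (coprimeWeight P * (selbergWeight 𝒜 - 1)) ω‖ ≤
      (6 * mertensProd P ^ 2 / Z +
        4 * mertensProd P * elemSymm P (fun p => (p : ℝ)⁻¹) t) * N := by
  have hprime : ∀ p ∈ P, p.Prime := fun p hp => Nat.prime_of_mem_primeFactors (hP hp)
  have h𝒜M : ∀ A ∈ 𝒜, A ⊆ M.primeFactors := fun A hA => (h𝒜.subset A hA).trans sdiff_subset
  have hmem := selbergWeight_mem_levelSpace h𝒜M h𝒜.prod_le
  have hone : (1 : ℕ → ℝ) ∈ levelSpace M (R * R) := one_mem_levelSpace (by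
    have : 1 ≤ R := by simpa using h𝒜.prod_le ∅ h𝒜.empty_mem
    positivity)
  have hD' {i : ℕ} (hi : i ≤ t) : ∀ A ∈ powersetCard i P, ∏ p ∈ A, p ≤ D := fun A hA =>
    hD A (mem_powersetCard.1 hA).1 ((mem_powersetCard.1 hA).2.trans_le hi)
  have hsq {A : Finset ℕ} (hA : A ⊆ P) : Squarefree (M / ∏ p ∈ A, p) :=
    hM.squarefree_of_dvd (Nat.div_dvd_of_dvd (prod_dvd_of_subset_primeFactors (hA.trans hP)))
  have hsub {A : Finset ℕ} (hA : A ⊆ P) : ∀ B ∈ 𝒜, B ⊆ (M / ∏ p ∈ A, p).primeFactors :=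
    fun B hB => subset_primeFactors_div_prod hM.ne_zero hP hA (h𝒜.subset B hB)
  have hmain (i : ℕ) (hi : i ∈ range t) := norm_expSum_elemSymm_mul_le (ω := ω) (i := i)
    hM.ne_zero.bot_lt hP (sub_mem hmem hone)
    (fun A hA m => by simp [selbergWeight_prod_mul hP h𝒜.subset hA])
    (fun A hA ζ hζ => norm_expSum_selbergWeight_sub_one_le (hsq hA) (hsub hA) h𝒜.isLowerSet
      h𝒜.empty_mem hZ h𝒜.lt hζ) (hD' (mem_range.1 hi).le) hN hω
  have herror := norm_expSum_elemSymm_mul_le (ω := 1) hM.ne_zero.bot_lt hP (add_mem hmem hone)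
    (fun A hA m => by simp [selbergWeight_prod_mul hP h𝒜.subset hA])
    (fun A hA ζ hζ => norm_expSum_selbergWeight_add_one_le (hsq hA) (hsub hA) h𝒜.empty_mem
      (Complex.norm_eq_one_of_pow_eq_one hζ (hsq hA).ne_zero)) (hD' le_rfl) hN norm_one
  refine (norm_expSum_coprimeWeight_mul_le_of_elemSymm hprime hω (fun n => ?_) hmain
    herror).trans ?_
  · have := selbergWeight_nonneg
      (fun A hA p hp => Nat.prime_of_mem_primeFactors (h𝒜M A hA hp)) n
    simp only [Pi.sub_apply, Pi.add_apply, Pi.one_apply, abs_le]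
    constructor <;> linarith
  · have hsum := (sum_elemSymm_le_prod_one_add (P := P) (x := fun p => (p : ℝ)⁻¹)
      (fun p _ => by positivity) t).trans (prod_one_add_inv_le_mertensProd hprime)
    have hW := zero_le_one.trans (one_le_mertensProd hprime)
    rw [← sum_mul, ← mul_sum, ← mul_sum]
    calc _ ≤ mertensProd P * (2 * (3 / Z * mertensProd P) * N +
          2 * (2 * elemSymm P (fun p => (p : ℝ)⁻¹) t) * N) := by gcongr
      _ = _ := by ring

end FundamentalLemma

/-! ### Chebyshev and Mertens bounds -/

section Primes

/-- The primes in the interval `(Z, R]`. -/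
def primesIoc (Z R : ℕ) : Finset ℕ := {p ∈ Ioc Z R | p.Prime}

variable {Z R p : ℕ}

lemma mem_primesIoc : p ∈ primesIoc Z R ↔ (Z < p ∧ p ≤ R) ∧ p.Prime := by
  simp only [primesIoc, mem_filter, mem_Ioc]

lemma prime_of_mem_primesIoc (hp : p ∈ primesIoc Z R) : p.Prime := (mem_primesIoc.1 hp).2

lemma disjoint_primesLE_primesIoc (Z R : ℕ) : Disjoint (Nat.primesLE Z) (primesIoc Z R) :=
  disjoint_left.2 fun _ hp hq => (Nat.le_of_mem_primesLE hp).not_gt (mem_primesIoc.1 hq).1.1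

lemma primesLE_union_primesIoc (h : Z ≤ R) : Nat.primesLE Z ∪ primesIoc Z R = Nat.primesLE R := by
  ext p
  simp only [mem_union, Nat.mem_primesLE, mem_primesIoc]
  grind

@[to_additive]
lemma prod_primesLE_mul_prod_primesIoc {M : Type*} [CommMonoid M] (h : Z ≤ R) (f : ℕ → M) :
    (∏ p ∈ Nat.primesLE Z, f p) * ∏ p ∈ primesIoc Z R, f p = ∏ p ∈ Nat.primesLE R, f p := by
  rw [← prod_union (disjoint_primesLE_primesIoc Z R), primesLE_union_primesIoc h]

lemma prod_primesIoc_two_mul_le (m : ℕ) : ∏ p ∈ primesIoc m (2 * m), p ≤ 4 ^ m := by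
  refine le_of_mul_le_mul_left ?_ (primorial_pos m)
  calc primorial m * ∏ p ∈ primesIoc m (2 * m), p = primorial (m + m) := by
        rw [← two_mul]; exact prod_primesLE_mul_prod_primesIoc (by omega) id
    _ ≤ primorial m * (m + m).choose m := primorial_add_le le_rfl
    _ ≤ primorial m * 4 ^ m := by
        gcongr
        exact (Nat.choose_le_two_pow _ _).trans_eq (by rw [← two_mul, pow_mul]; norm_num)

lemma mul_card_primesIoc_two_pow_le (j : ℕ) :
    j * #(primesIoc (2 ^ j) (2 ^ (j + 1))) ≤ 2 * 2 ^ j := by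
  have h : (2 ^ j) ^ #(primesIoc (2 ^ j) (2 ^ (j + 1))) ≤ 4 ^ 2 ^ j :=
    (pow_card_le_prod _ _ _ fun p hp => (mem_primesIoc.1 hp).1.1.le).trans
      (by rw [pow_succ']; exact prod_primesIoc_two_mul_le _)
  rw [← pow_mul, show (4 : ℕ) = 2 ^ 2 by norm_num, ← pow_mul] at h
  exact (Nat.pow_le_pow_iff_right one_lt_two).1 h

end Primes

section Mertens

lemma mertensProd_le_pow {P : Finset ℕ} {z : ℝ} (hz : 0 < z) (hP : ∀ p ∈ P, z ≤ (p : ℝ) - 1) :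
    mertensProd P ≤ (1 + 1 / z) ^ #P := by
  rw [← prod_const]
  refine prod_le_prod (fun p hp => ?_) fun p hp => ?_ <;> have hp0 := hz.trans_le (hP p hp)
  · exact div_nonneg p.cast_nonneg hp0.le
  calc (p : ℝ) / (p - 1) = 1 + 1 / (p - 1) := by field_simp; ring
    _ ≤ 1 + 1 / z := by gcongr; exact hP p hp

lemma mertensProd_primesIoc_le (j : ℕ) (hj : 0 < j) :
    mertensProd (primesIoc (2 ^ j) (2 ^ (j + 1))) ≤ Real.exp (2 / j) := by
  set n := #(primesIoc (2 ^ j) (2 ^ (j + 1)))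
  have hcard : (j : ℝ) * n ≤ 2 * 2 ^ j := by exact_mod_cast mul_card_primesIoc_two_pow_le j
  calc mertensProd (primesIoc (2 ^ j) (2 ^ (j + 1))) ≤ (1 + 1 / 2 ^ j) ^ n := by
        refine mertensProd_le_pow (by positivity) fun p hp => ?_
        have : ((2 ^ j + 1 : ℕ) : ℝ) ≤ p := by exact_mod_cast (mem_primesIoc.1 hp).1.1
        push_cast at this
        linarith
    _ ≤ Real.exp (1 / 2 ^ j) ^ n := by
        gcongr
        linarith [Real.add_one_le_exp ((1 : ℝ) / 2 ^ j)]
    _ ≤ Real.exp (2 / j) := by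
        rw [← Real.exp_nat_mul, Real.exp_le_exp, mul_one_div,
          div_le_div_iff₀ (by positivity) (by positivity)]
        linarith

lemma primesLE_two : Nat.primesLE 2 = {2} := by decide

lemma sq_le_succ_sq_mul_exp (j : ℕ) :
    (j : ℝ) ^ 2 ≤ ((j + 1 : ℕ) : ℝ) ^ 2 * Real.exp (-(2 / (j + 1 : ℕ))) := by
  have h : (j : ℝ) ≤ (j + 1 : ℕ) * Real.exp (-(1 / (j + 1 : ℕ))) := by
    calc (j : ℝ) = (j + 1 : ℕ) * (-(1 / (j + 1 : ℕ)) + 1) := by push_cast; field_simp; ring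
      _ ≤ _ := by gcongr; exact Real.add_one_le_exp _
  calc (j : ℝ) ^ 2 ≤ ((j + 1 : ℕ) * Real.exp (-(1 / (j + 1 : ℕ)))) ^ 2 := by gcongr
    _ = _ := by rw [mul_pow, ← Real.exp_nat_mul]; congr 2; push_cast; ring

lemma mertensProd_primesLE_le_mul_exp (j : ℕ) (hj : 1 ≤ j) :
    mertensProd (Nat.primesLE (2 ^ j)) ≤ 2 * (j : ℝ) ^ 2 * Real.exp (2 - 2 / j) := by
  induction j, hj using Nat.le_induction with
  | base => rw [pow_one, primesLE_two]; norm_num [mertensProd]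
  | succ j hj ih =>
    calc mertensProd (Nat.primesLE (2 ^ (j + 1)))
        = mertensProd (Nat.primesLE (2 ^ j)) * mertensProd (primesIoc (2 ^ j) (2 ^ (j + 1))) :=
          (prod_primesLE_mul_prod_primesIoc (Nat.pow_le_pow_right two_pos j.le_succ) _).symm
      _ ≤ 2 * (j : ℝ) ^ 2 * Real.exp (2 - 2 / j) * Real.exp (2 / j) :=
          mul_le_mul ih (mertensProd_primesIoc_le j hj)
            (zero_le_one.trans (one_le_mertensProd fun _ => prime_of_mem_primesIoc)) (by positivity)
      _ = 2 * Real.exp 2 * (j : ℝ) ^ 2 := by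
          rw [mul_assoc, ← Real.exp_add, sub_add_cancel]; ring
      _ ≤ 2 * Real.exp 2 * (((j + 1 : ℕ) : ℝ) ^ 2 * Real.exp (-(2 / (j + 1 : ℕ)))) := by
          gcongr; exact sq_le_succ_sq_mul_exp j
      _ = _ := by rw [sub_eq_add_neg, Real.exp_add]; ring

lemma mertensProd_primesLE_le (j : ℕ) (hj : 1 ≤ j) :
    mertensProd (Nat.primesLE (2 ^ j)) ≤ 16 * (j : ℝ) ^ 2 := by
  have hexp : Real.exp (2 - 2 / j) ≤ 8 := by
    calc Real.exp (2 - 2 / j) ≤ Real.exp 1 ^ 2 := by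
          rw [← Real.exp_nat_mul, Real.exp_le_exp]
          push_cast
          linarith [show (0 : ℝ) ≤ 2 / j by positivity]
      _ ≤ 2.7182818286 ^ 2 := by gcongr; exact Real.exp_one_lt_d9.le
      _ ≤ 8 := by norm_num
  calc _ ≤ 2 * (j : ℝ) ^ 2 * Real.exp (2 - 2 / j) := mertensProd_primesLE_le_mul_exp j hj
    _ ≤ 2 * (j : ℝ) ^ 2 * 8 := by gcongr
    _ = _ := by ring

end Mertens

/-! ### Lower bound for the Selberg mass -/

section SelbergMass

/-- The sets of primes in `(Z, R]` with product at most `R`. -/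
def sievingFamily (Z R : ℕ) : Finset (Finset ℕ) :=
  {A ∈ (primesIoc Z R).powerset | ∏ p ∈ A, p ≤ R}

variable {Z R : ℕ} {A : Finset ℕ}

lemma mem_sievingFamily : A ∈ sievingFamily Z R ↔ A ⊆ primesIoc Z R ∧ ∏ p ∈ A, p ≤ R := by
  simp only [sievingFamily, mem_filter, mem_powerset]

lemma prime_of_mem_sievingFamily (hA : A ∈ sievingFamily Z R) : ∀ p ∈ A, p.Prime :=
  fun _ hp => prime_of_mem_primesIoc ((mem_sievingFamily.1 hA).1 hp)

lemma empty_mem_sievingFamily (hR : 1 ≤ R) : ∅ ∈ sievingFamily Z R :=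
  mem_sievingFamily.2 ⟨empty_subset _, by simpa using hR⟩

lemma isSievingFamily_sievingFamily (hR : 1 ≤ R) :
    IsSievingFamily (primorial R) (Nat.primesLE Z) Z R (sievingFamily Z R) where
  empty_mem := empty_mem_sievingFamily hR
  isLowerSet A B hBA hA := by
    have hA := mem_coe.1 hA
    exact mem_sievingFamily.2 ⟨hBA.trans (mem_sievingFamily.1 hA).1,
      (prod_le_prod_of_subset_of_one_le' hBA fun p hp _ =>
        (prime_of_mem_sievingFamily hA p hp).one_le).trans (mem_sievingFamily.1 hA).2⟩
  subset A hA p hp := by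
    have hp := mem_primesIoc.1 ((mem_sievingFamily.1 hA).1 hp)
    rw [primeFactors_primorial, mem_sdiff, Nat.mem_primesLE, Nat.mem_primesLE]
    exact ⟨⟨hp.1.2, hp.2⟩, fun h => h.1.not_gt hp.1.1⟩
  lt A hA p hp := (mem_primesIoc.1 ((mem_sievingFamily.1 hA).1 hp)).1.1
  prod_le A hA := (mem_sievingFamily.1 hA).2

lemma sum_powerset_selbergCoeff {P : Finset ℕ} (hP : ∀ p ∈ P, p.Prime) :
    ∑ A ∈ P.powerset, selbergCoeff A = mertensProd P := by
  simp only [selbergCoeff, mertensProd]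
  rw [← prod_one_add]
  refine prod_congr rfl fun p hp => ?_
  have := sub_one_pos_of_prime (hP p hp)
  field_simp
  ring

lemma inv_prod_le_selbergCoeff (hA : ∀ p ∈ A, p.Prime) :
    ((∏ p ∈ A, p : ℕ) : ℝ)⁻¹ ≤ selbergCoeff A := by
  rw [Nat.cast_prod, ← prod_inv_distrib]
  refine prod_le_prod (fun p _ => by positivity) fun p hp => ?_
  have := sub_one_pos_of_prime (hA p hp)
  rw [← one_div]
  gcongr
  linarith

lemma sum_le_sum_of_injOn {ι κ : Type*} {s : Finset ι} {t : Finset κ} {f : ι → ℝ} {g : κ → ℝ}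
    (e : ι → κ) (he : Set.InjOn e s) (hmaps : ∀ i ∈ s, e i ∈ t) (hg : ∀ k ∈ t, 0 ≤ g k)
    (hfg : ∀ i ∈ s, f i ≤ g (e i)) : ∑ i ∈ s, f i ≤ ∑ k ∈ t, g k := by
  classical
  calc ∑ i ∈ s, f i ≤ ∑ i ∈ s, g (e i) := sum_le_sum hfg
    _ = ∑ k ∈ s.image e, g k := (sum_image he).symm
    _ ≤ ∑ k ∈ t, g k :=
      sum_le_sum_of_subset_of_nonneg (image_subset_iff.2 hmaps) fun k hk _ => hg k hk

lemma sum_inv_le_two_mul_sum_squarefree (R : ℕ) :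
    ∑ m ∈ Icc 1 R, (m : ℝ)⁻¹ ≤ 2 * ∑ q ∈ Icc 1 R with Squarefree q, (q : ℝ)⁻¹ := by
  choose q b hqb hq using Nat.sq_mul_squarefree
  have hsq : ∑ i ∈ Ioo 0 (R + 1), ((i : ℝ) ^ 2)⁻¹ ≤ 2 := by
    simpa using sum_Ioo_inv_sq_le (α := ℝ) 0 (R + 1)
  calc ∑ m ∈ Icc 1 R, (m : ℝ)⁻¹
      ≤ ∑ x ∈ {q ∈ Icc 1 R | Squarefree q} ×ˢ Ioo 0 (R + 1), (x.1 : ℝ)⁻¹ * ((x.2 : ℝ) ^ 2)⁻¹ := by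
        refine sum_le_sum_of_injOn (fun m => (q m, b m)) (fun m _ m' _ h => ?_) (fun m hm => ?_)
          (fun x _ => by positivity) fun m _ => ?_
        · obtain ⟨hqm, hbm⟩ := Prod.mk.inj h
          rw [← hqb m, ← hqb m', hqm, hbm]
        · have hm := mem_Icc.1 hm
          have hqR := Nat.le_of_dvd (by omega) (Dvd.intro_left (b m ^ 2) (hqb m))
          have hbR := Nat.le_of_dvd (by omega)
            ((dvd_pow_self (b m) two_ne_zero).trans (Dvd.intro (q m) (hqb m)))
          have hb : b m ≠ 0 := fun h => by have := hqb m; simp [h] at this; omega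
          simp only [mem_product, mem_filter, mem_Icc, mem_Ioo]
          exact ⟨⟨⟨(hq m).ne_zero.bot_lt, by omega⟩, hq m⟩, by omega, by omega⟩
        · rw [← mul_inv, mul_comm]
          conv_lhs => rw [← hqb m]
          push_cast
          rfl
    _ = (∑ q ∈ Icc 1 R with Squarefree q, (q : ℝ)⁻¹) * ∑ i ∈ Ioo 0 (R + 1), ((i : ℝ) ^ 2)⁻¹ := by
        rw [sum_mul_sum, sum_product]
    _ ≤ (∑ q ∈ Icc 1 R with Squarefree q, (q : ℝ)⁻¹) * 2 := by gcongr
    _ = _ := mul_comm _ _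

lemma sum_squarefree_inv_le (Z R : ℕ) :
    ∑ q ∈ Icc 1 R with Squarefree q, (q : ℝ)⁻¹ ≤
      mertensProd (Nat.primesLE Z) * selbergMass (sievingFamily Z R) := by
  have hsplit : ∀ q : ℕ, Squarefree q →
      (∏ p ∈ q.primeFactors with p ≤ Z, p) * ∏ p ∈ q.primeFactors with ¬ p ≤ Z, p = q :=
    fun q hq => by rw [prod_filter_mul_prod_filter_not, Nat.prod_primeFactors_of_squarefree hq]
  have hprime : ∀ (q : ℕ) (r : ℕ → Prop) [DecidablePred r], ∀ p ∈ {p ∈ q.primeFactors | r p},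
      p.Prime := fun q r _ p hp => Nat.prime_of_mem_primeFactors (mem_filter.1 hp).1
  rw [← sum_powerset_selbergCoeff fun p => Nat.prime_of_mem_primesLE, selbergMass, sum_mul_sum,
    ← sum_product']
  refine sum_le_sum_of_injOn
    (fun q => ({p ∈ q.primeFactors | p ≤ Z}, {p ∈ q.primeFactors | ¬ p ≤ Z}))
    (fun q hq q' hq' h => ?_) (fun q hq => ?_) (fun x hx => ?_) fun q hq => ?_
  · obtain ⟨hsmall, hlarge⟩ := Prod.mk.inj h
    rw [← hsplit q (mem_filter.1 hq).2, ← hsplit q' (mem_filter.1 hq').2, hsmall, hlarge]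
  · obtain ⟨hqR, hsq⟩ := mem_filter.1 hq
    have hqR := mem_Icc.1 hqR
    rw [mem_product, mem_powerset, mem_sievingFamily]
    refine ⟨fun p hp => Nat.mem_primesLE.2 ⟨(mem_filter.1 hp).2, hprime q _ p hp⟩,
      fun p hp => ?_, ?_⟩
    · have hpq := Nat.le_of_mem_primeFactors (mem_filter.1 hp).1
      exact mem_primesIoc.2 ⟨⟨not_le.1 (mem_filter.1 hp).2, hpq.trans hqR.2⟩, hprime q _ p hp⟩
    · exact (Nat.le_of_dvd hqR.1 (Dvd.intro_left _ (hsplit q hsq))).trans hqR.2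
  · obtain ⟨h₁, h₂⟩ := mem_product.1 hx
    exact mul_nonneg (selbergCoeff_nonneg fun p hp =>
        Nat.prime_of_mem_primesLE (mem_powerset.1 h₁ hp))
      (selbergCoeff_nonneg (prime_of_mem_sievingFamily h₂))
  · conv_lhs => rw [← hsplit q (mem_filter.1 hq).2, Nat.cast_mul, mul_inv]
    exact mul_le_mul (inv_prod_le_selbergCoeff (hprime q _)) (inv_prod_le_selbergCoeff (hprime q _))
      (by positivity) (selbergCoeff_nonneg (hprime q _))

lemma log_le_two_mul_mertensProd_mul_selbergMass (Z : ℕ) (hR : 1 ≤ R) :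
    Real.log R ≤ 2 * (mertensProd (Nat.primesLE Z) * selbergMass (sievingFamily Z R)) := by
  calc Real.log R ≤ Real.log (R + 1 : ℕ) := Real.log_le_log (by positivity) (by norm_num)
    _ ≤ ∑ m ∈ Icc 1 R, (m : ℝ)⁻¹ := by
        simpa [harmonic_eq_sum_Icc] using log_add_one_le_harmonic R
    _ ≤ 2 * ∑ q ∈ Icc 1 R with Squarefree q, (q : ℝ)⁻¹ := sum_inv_le_two_mul_sum_squarefree R
    _ ≤ _ := by gcongr; exact sum_squarefree_inv_le Z R

end SelbergMass

/-! ### Dyadic prime averages -/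

section Dyadic

lemma mul_succ_le_mul_two_pow (K : ℕ) (hK : 2 ≤ K) : 8 * (K + 1) ≤ 7 * 2 ^ K := by
  induction K, hK using Nat.le_induction with
  | base => norm_num
  | succ K hK ih => rw [pow_succ]; omega

lemma two_pow_div_le_card_primesLE (K : ℕ) (hK : 1 ≤ K) :
    (2 : ℝ) ^ K / (8 * K) ≤ #(Nat.primesLE (2 ^ K)) := by
  obtain rfl | hK := Nat.eq_or_lt_of_le hK
  · norm_num [primesLE_two]
  have hlog2 : 0 < Real.log 2 := Real.log_pos one_lt_two
  have hlog : Real.log ((2 : ℝ) ^ K + 1) ≤ 7 / 8 * 2 ^ K * Real.log 2 := by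
    calc Real.log ((2 : ℝ) ^ K + 1) ≤ Real.log (2 ^ (K + 1)) := by
          gcongr
          rw [pow_succ]
          linarith [one_le_pow₀ one_le_two (M₀ := ℝ) (n := K)]
      _ = (K + 1) * Real.log 2 := by rw [Real.log_pow]; push_cast; rfl
      _ ≤ 7 / 8 * 2 ^ K * Real.log 2 := by
          have : (8 * (K + 1) : ℝ) ≤ 7 * 2 ^ K := by exact_mod_cast mul_succ_le_mul_two_pow K hK
          gcongr
          linarith
  calc (2 : ℝ) ^ K / (8 * K) = (2 ^ K * Real.log 2 - 7 / 8 * 2 ^ K * Real.log 2) /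
        (K * Real.log 2) := by field_simp; ring
    _ ≤ (2 ^ K * Real.log 2 - Real.log ((2 : ℝ) ^ K + 1)) / (K * Real.log 2) := by gcongr
    _ ≤ #(Nat.primesLE (2 ^ K)) := by
        simpa [Nat.primesLE_card_eq_primeCounting, Real.log_pow] using Chebyshev.pi_ge (2 ^ K)

/-- The average of `f` along the primes in `(2^(k-1), 2^k]`, with the weight `k / 2^k` in place of
the inverse of the number of these primes. -/
noncomputable def dyadicPrimeAvg (f : ℤ → ℝ) (k : ℕ) (x : ℤ) : ℝ :=
  k / 2 ^ k * ∑ p ∈ primesIoc (2 ^ (k - 1)) (2 ^ k), f (x + p)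

variable {f : ℤ → ℝ} {x : ℤ} {μ : ℝ}

lemma sum_primesLE_succ_le (h : ∀ k, 1 ≤ k → dyadicPrimeAvg f k x ≤ μ) (m : ℕ) :
    ∑ p ∈ Nat.primesLE (2 ^ (m + 1)), f (x + p) ≤
      ∑ p ∈ Nat.primesLE (2 ^ m), f (x + p) + 2 ^ (m + 1) / (m + 1) * μ := by
  rw [← sum_primesLE_add_sum_primesIoc (Nat.pow_le_pow_right two_pos m.le_succ)]
  gcongr
  calc ∑ p ∈ primesIoc (2 ^ m) (2 ^ (m + 1)), f (x + p)
      = 2 ^ (m + 1) / (m + 1) * dyadicPrimeAvg f (m + 1) x := by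
        rw [dyadicPrimeAvg, Nat.add_sub_cancel, ← mul_assoc]
        push_cast
        field_simp
    _ ≤ _ := by gcongr; exact h _ (by omega)

lemma sum_primesLE_le (h : ∀ k, 1 ≤ k → dyadicPrimeAvg f k x ≤ μ) (hμ : 0 ≤ μ) (m : ℕ)
    (hm : 2 ≤ m) : ∑ p ∈ Nat.primesLE (2 ^ m), f (x + p) ≤ 2 ^ m / m * (4 * μ) := by
  induction m, hm using Nat.le_induction with
  | base =>
    have h₀ := sum_primesLE_succ_le h 0
    have h₁ := sum_primesLE_succ_le h 1
    rw [pow_zero, Nat.primesLE_one, sum_empty] at h₀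
    norm_num at h₀ h₁ ⊢
    linarith
  | succ m hm ih =>
    have hm' : (2 : ℝ) ≤ m := by exact_mod_cast hm
    have hratio : (2 : ℝ) / m ≤ 3 / (m + 1) := by
      rw [div_le_div_iff₀ (by positivity) (by positivity)]
      linarith
    calc ∑ p ∈ Nat.primesLE (2 ^ (m + 1)), f (x + p)
        ≤ 2 ^ m / m * (4 * μ) + 2 ^ (m + 1) / (m + 1) * μ :=
          (sum_primesLE_succ_le h m).trans (by gcongr)
      _ = 2 * μ * 2 ^ m * (2 / m + 1 / (m + 1)) := by rw [pow_succ]; field_simp; ring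
      _ ≤ 2 * μ * 2 ^ m * (3 / (m + 1) + 1 / (m + 1)) := by gcongr
      _ = _ := by rw [pow_succ]; push_cast; field_simp; ring

lemma primeAvg_le_of_dyadicPrimeAvg_le (h : ∀ k, 1 ≤ k → dyadicPrimeAvg f k x ≤ μ)
    (hf : ∀ y, 0 ≤ f y) {N : ℕ} (hN : 2 ≤ N) : primeAvg f N x ≤ 64 * μ := by
  have hμ : 0 ≤ μ := (mul_nonneg (by positivity) (sum_nonneg fun _ _ => hf _)).trans (h 1 le_rfl)
  set K := Nat.log 2 N
  have hK : 1 ≤ K := Nat.log_pos one_lt_two hN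
  have hKN : 2 ^ K ≤ N := Nat.pow_log_le_self 2 (by omega)
  have hcard : (2 : ℝ) ^ K / (8 * K) ≤ #(primesUpTo N) :=
    (two_pow_div_le_card_primesLE K hK).trans
      (by exact_mod_cast card_le_card (Nat.primesLE_mono hKN))
  have hpos : (0 : ℝ) < 2 ^ K / (8 * K) := by positivity
  rw [primeAvg, inv_mul_le_iff₀ (hpos.trans_le hcard)]
  calc ∑ p ∈ primesUpTo N, f (x + p) ≤ ∑ p ∈ Nat.primesLE (2 ^ (K + 1)), f (x + p) :=
        sum_le_sum_of_subset_of_nonneg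
          (Nat.primesLE_mono (Nat.lt_pow_succ_log_self one_lt_two N).le) fun _ _ _ => hf _
    _ ≤ 2 ^ (K + 1) / (K + 1 : ℕ) * (4 * μ) := sum_primesLE_le h hμ _ (by omega)
    _ ≤ 2 ^ (K + 1) / K * (4 * μ) := by gcongr; omega
    _ = 2 ^ K / (8 * K) * (64 * μ) := by rw [pow_succ]; field_simp; ring
    _ ≤ #(primesUpTo N) * (64 * μ) := by gcongr

end Dyadic

section Domination

lemma coprimeWeight_of_coprime {P : Finset ℕ} {n : ℕ} (hn : ∀ p ∈ P, ¬ p ∣ n) :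
    coprimeWeight P n = mertensProd P := by
  rw [coprimeWeight, prod_eq_one, mul_one]
  intro p hp
  rw [dvdIndicator, if_neg (hn p hp), sub_zero]

lemma mul_log_two_le_coprimeWeight_mul_selbergWeight {j r k n : ℕ} (hj : j < k) (hr : r < k)
    (hn : n ∈ primesIoc (2 ^ (k - 1)) (2 ^ k)) :
    r * Real.log 2 ≤
      2 * (coprimeWeight (Nat.primesLE (2 ^ j)) n *
        selbergWeight (sievingFamily (2 ^ j) (2 ^ r)) n) := by
  obtain ⟨⟨hlt, -⟩, hprime⟩ := mem_primesIoc.1 hn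
  have hndvd : ∀ i < k, ∀ q : ℕ, q.Prime → q ≤ 2 ^ i → ¬ q ∣ n := fun i hi q hq hqi hqn => by
    have := Nat.pow_le_pow_right two_pos (Nat.le_sub_one_of_lt hi)
    have := (Nat.prime_dvd_prime_iff_eq hq hprime).1 hqn
    omega
  rw [coprimeWeight_of_coprime fun q hq => hndvd j hj q (Nat.prime_of_mem_primesLE hq)
      (Nat.le_of_mem_primesLE hq),
    selbergWeight_of_coprime fun A hA q hq => hndvd r hr q (prime_of_mem_sievingFamily hA q hq)
      (mem_primesIoc.1 ((mem_sievingFamily.1 hA).1 hq)).1.2]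
  simpa [Real.log_pow] using
    log_le_two_mul_mertensProd_mul_selbergMass (2 ^ j) (Nat.one_le_two_pow (n := r))

lemma le_coprimeWeight_mul_selbergWeight {j k n : ℕ} (hk : 20 ≤ k) (hj : j < k)
    (hn : n ∈ primesIoc (2 ^ (k - 1)) (2 ^ k)) :
    (k : ℝ) ≤ 120 * (coprimeWeight (Nat.primesLE (2 ^ j)) n *
      selbergWeight (sievingFamily (2 ^ j) (2 ^ (k / 20))) n) := by
  have hweight := mul_log_two_le_coprimeWeight_mul_selbergWeight hj (by omega : k / 20 < k) hn
  have hfloor : (k : ℝ) ≤ 40 * (k / 20 : ℕ) := by exact_mod_cast (by omega : k ≤ 40 * (k / 20))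
  nlinarith [Real.log_two_gt_d9]

end Domination

/-! ### Sieve kernels -/

section Kernels

variable {P : Finset ℕ} {Z R : ℕ}

lemma prod_one_sub_dvdIndicator_mem_Icc (P : Finset ℕ) (n : ℕ) :
    ∏ p ∈ P, (1 - dvdIndicator p n) ∈ Set.Icc (0 : ℝ) 1 :=
  ⟨prod_nonneg fun p _ => sub_nonneg.2 (dvdIndicator_mem_Icc p n).2,
    prod_le_one (fun p _ => sub_nonneg.2 (dvdIndicator_mem_Icc p n).2)
      fun p _ => sub_le_self _ (dvdIndicator_mem_Icc p n).1⟩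

lemma coprimeWeight_nonneg (hP : ∀ p ∈ P, p.Prime) (n : ℕ) : 0 ≤ coprimeWeight P n :=
  mul_nonneg (zero_le_one.trans (one_le_mertensProd hP)) (prod_one_sub_dvdIndicator_mem_Icc P n).1

lemma coprimeWeight_le_mertensProd (hP : ∀ p ∈ P, p.Prime) (n : ℕ) :
    coprimeWeight P n ≤ mertensProd P :=
  mul_le_of_le_one_right (zero_le_one.trans (one_le_mertensProd hP))
    (prod_one_sub_dvdIndicator_mem_Icc P n).2

lemma coprimeWeight_periodic {u : ℕ} (hu : ∀ p ∈ P, p ∣ u) :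
    Function.Periodic (coprimeWeight P) u := fun n => by
  simp only [coprimeWeight, dvdIndicator]
  congr 1
  exact prod_congr rfl fun p hp => by simp only [Nat.dvd_add_left (hu p hp)]

lemma selbergSum_powerset (hP : ∀ p ∈ P, p.Prime) : selbergSum P.powerset = coprimeWeight P := by
  funext n
  simp only [selbergSum, selbergTerm, coprimeWeight, mertensProd]
  rw [← prod_one_add, ← prod_mul_distrib]
  refine prod_congr rfl fun p hp => ?_
  have := sub_one_pos_of_prime (hP p hp)
  rw [selbergFactor_eq (hP p hp)]
  field_simp
  ring

lemma selbergWeight_powerset (hP : ∀ p ∈ P, p.Prime) :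
    selbergWeight P.powerset = coprimeWeight P := by
  funext n
  have hmert := zero_lt_one.trans_le (one_le_mertensProd hP)
  have hsq : (∏ p ∈ P, (1 - dvdIndicator p n)) ^ 2 = ∏ p ∈ P, (1 - dvdIndicator p n) := by
    rw [← prod_pow]
    exact prod_congr rfl fun p _ => by unfold dvdIndicator; split_ifs <;> norm_num
  rw [selbergWeight, selbergSum_powerset hP, selbergMass, sum_powerset_selbergCoeff hP,
    coprimeWeight, mul_pow, hsq]
  field_simp

lemma coprimeWeight_primesLE_mul_primesIoc (h : Z ≤ R) :
    coprimeWeight (Nat.primesLE Z) * coprimeWeight (primesIoc Z R) =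
      coprimeWeight (Nat.primesLE R) := by
  funext n
  simp only [Pi.mul_apply, coprimeWeight, mertensProd]
  rw [mul_mul_mul_comm, prod_primesLE_mul_prod_primesIoc h, prod_primesLE_mul_prod_primesIoc h]

/-- The weight `Λ_j`: the normalised indicator of the integers without prime factors `≤ 2 ^ j`. -/
noncomputable def sieveWeight (j : ℕ) : ℕ → ℝ := coprimeWeight (Nat.primesLE (2 ^ j))

lemma sieveWeight_nonneg (j n : ℕ) : 0 ≤ sieveWeight j n :=
  coprimeWeight_nonneg (fun _ => Nat.prime_of_mem_primesLE) n

lemma sieveWeight_le {j : ℕ} (hj : 1 ≤ j) (n : ℕ) : sieveWeight j n ≤ 16 * (j : ℝ) ^ 2 :=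
  (coprimeWeight_le_mertensProd (fun _ => Nat.prime_of_mem_primesLE) n).trans
    (mertensProd_primesLE_le j hj)

/-- The difference `Λ_{j+1} - Λ_j` of consecutive sieve weights. -/
noncomputable def sieveIncrement (j : ℕ) : ℕ → ℝ := sieveWeight (j + 1) - sieveWeight j

lemma sieveIncrement_eq (j : ℕ) : sieveIncrement j =
    sieveWeight j * (selbergWeight (primesIoc (2 ^ j) (2 ^ (j + 1))).powerset - 1) := by
  rw [selbergWeight_powerset fun _ => prime_of_mem_primesIoc, mul_sub_one, sieveIncrement,
    sieveWeight, sieveWeight,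
    coprimeWeight_primesLE_mul_primesIoc (Nat.pow_le_pow_right two_pos j.le_succ)]

/-- The error `Λ_j (g - 1)` made when the Selberg weight `g` of the primes between `2 ^ j` and
`2 ^ (k / 20)` is replaced with its mean value. -/
noncomputable def sieveRemainder (j k : ℕ) : ℕ → ℝ :=
  sieveWeight j * (selbergWeight (sievingFamily (2 ^ j) (2 ^ (k / 20))) - 1)

/-- A common period of the weights `Λ_i`, `i ≤ j`, that is long enough for the exponential sums of
`Λ_j - Λ_{j-1}` over one period to be small. -/
def blockLength (j : ℕ) : ℕ := primorial (2 ^ j) ^ 8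

lemma blockLength_pos (j : ℕ) : 0 < blockLength j := pow_pos (primorial_pos _) 8

lemma blockLength_dvd_blockLength {i j : ℕ} (h : i ≤ j) : blockLength i ∣ blockLength j :=
  pow_dvd_pow_of_dvd (primorial_dvd_primorial (Nat.pow_le_pow_right two_pos h)) 8

lemma blockLength_le (j : ℕ) : blockLength j ≤ 2 ^ (16 * 2 ^ j) := by
  calc blockLength j ≤ (4 ^ 2 ^ j) ^ 8 := Nat.pow_le_pow_left (primorial_le_four_pow _) 8
    _ = 2 ^ (16 * 2 ^ j) := by
      rw [show (4 : ℕ) = 2 ^ 2 by norm_num, ← pow_mul, ← pow_mul]; congr 1; ring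

lemma sieveWeight_periodic {i j : ℕ} (h : i ≤ j) :
    Function.Periodic (sieveWeight i) (blockLength j) :=
  coprimeWeight_periodic fun p hp =>
    ((dvd_prod_of_mem id hp).trans (dvd_pow_self _ (by norm_num))).trans
      (blockLength_dvd_blockLength h)

lemma sieveIncrement_periodic (i : ℕ) :
    Function.Periodic (sieveIncrement i) (blockLength (i + 1)) :=
  (sieveWeight_periodic le_rfl).sub (sieveWeight_periodic i.le_succ)

end Kernels

/-! ### Exponential sums of the kernels -/

section KernelBounds

variable {ω : ℂ}

/-- The bound for the exponential sums of the kernels `Λ_{j+1} - Λ_j` and `Λ_j (g - 1)`, relative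
to the length of the sum. -/
noncomputable def sieveError (j : ℕ) : ℝ :=
  6 * mertensProd (Nat.primesLE (2 ^ j)) ^ 2 / 2 ^ j +
    4 * mertensProd (Nat.primesLE (2 ^ j)) ^ 17 / 16 ^ j

lemma sieveError_nonneg (j : ℕ) : 0 ≤ sieveError j := by
  have := one_le_mertensProd (P := Nat.primesLE (2 ^ j)) fun _ => Nat.prime_of_mem_primesLE
  unfold sieveError
  positivity

lemma norm_expSum_sieveWeight_mul_le {j M R D N : ℕ} {𝒜 : Finset (Finset ℕ)} (hM : Squarefree M)
    (hjM : Nat.primesLE (2 ^ j) ⊆ M.primeFactors)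
    (h𝒜 : IsSievingFamily M (Nat.primesLE (2 ^ j)) (2 ^ j) R 𝒜)
    (hD : ∀ A ⊆ Nat.primesLE (2 ^ j), #A ≤ j → ∏ p ∈ A, p ≤ D) (hN : (D * (R * R)) ^ 4 ≤ N)
    (hω : ‖ω‖ = 1) :
    ‖expSum N (sieveWeight j * (selbergWeight 𝒜 - 1)) ω‖ ≤ sieveError j * N := by
  set W := mertensProd (Nat.primesLE (2 ^ j))
  have hprime : ∀ p ∈ Nat.primesLE (2 ^ j), p.Prime := fun _ => Nat.prime_of_mem_primesLE
  have hW : 1 ≤ W := one_le_mertensProd hprime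
  refine (norm_expSum_coprimeWeight_mul_le hM hjM h𝒜 (by positivity) hD hN hω).trans ?_
  gcongr
  calc 6 * W ^ 2 / (2 ^ j : ℕ) + 4 * W * elemSymm (Nat.primesLE (2 ^ j)) (fun p => (p : ℝ)⁻¹) j
      ≤ 6 * W ^ 2 / (2 ^ j : ℕ) + 4 * W * (W ^ 16 / 16 ^ j) := by
        gcongr; exact elemSymm_inv_le hprime j
    _ = sieveError j := by push_cast [sieveError]; ring

lemma isSievingFamily_powerset_primesIoc (Z R : ℕ) :
    IsSievingFamily (primorial R) (Nat.primesLE Z) Z (∏ p ∈ primesIoc Z R, p)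
      (primesIoc Z R).powerset where
  empty_mem := empty_mem_powerset _
  isLowerSet _ _ hBA hA := mem_coe.2 (mem_powerset.2 (hBA.trans (mem_powerset.1 (mem_coe.1 hA))))
  subset A hA p hp := by
    have hp := mem_primesIoc.1 (mem_powerset.1 hA hp)
    rw [primeFactors_primorial, mem_sdiff, Nat.mem_primesLE, Nat.mem_primesLE]
    exact ⟨⟨hp.1.2, hp.2⟩, fun h => h.1.not_gt hp.1.1⟩
  lt A hA p hp := (mem_primesIoc.1 (mem_powerset.1 hA hp)).1.1
  prod_le A hA := prod_le_prod_of_subset_of_one_le' (mem_powerset.1 hA) fun p hp _ =>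
    (prime_of_mem_primesIoc hp).one_le

lemma primesLE_subset_primeFactors_primorial {Z R : ℕ} (h : Z ≤ R) :
    Nat.primesLE Z ⊆ (primorial R).primeFactors := by
  rw [primeFactors_primorial, ← primesLE_union_primesIoc h]
  exact subset_union_left

lemma norm_expSum_sieveIncrement_le (i : ℕ) (hω : ‖ω‖ = 1) :
    ‖expSum (blockLength (i + 1)) (sieveIncrement i) ω‖ ≤ sieveError i * blockLength (i + 1) := by
  have hle : 2 ^ i ≤ 2 ^ (i + 1) := Nat.pow_le_pow_right two_pos i.le_succ
  rw [sieveIncrement_eq]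
  refine norm_expSum_sieveWeight_mul_le (D := primorial (2 ^ i)) (squarefree_primorial _)
    (primesLE_subset_primeFactors_primorial hle) (isSievingFamily_powerset_primesIoc _ _)
    (fun A hA _ => prod_le_prod_of_subset_of_one_le' hA fun p hp _ =>
      (Nat.prime_of_mem_primesLE hp).one_le) ?_ hω
  have hprod : primorial (2 ^ i) * ∏ p ∈ primesIoc (2 ^ i) (2 ^ (i + 1)), p =
      primorial (2 ^ (i + 1)) := prod_primesLE_mul_prod_primesIoc hle id
  rw [blockLength, ← hprod, show 8 = 2 * 4 by norm_num, pow_mul]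
  refine Nat.pow_le_pow_left ?_ 4
  calc _ ≤ primorial (2 ^ i) * (primorial (2 ^ i) * _) := Nat.le_mul_of_pos_left _ (primorial_pos _)
    _ = _ := by ring

lemma norm_expSum_sieveRemainder_le {j k N : ℕ} (hjk : 20 * j ^ 2 ≤ k) (hN : 2 ^ k ≤ N)
    (hω : ‖ω‖ = 1) : ‖expSum N (sieveRemainder j k) ω‖ ≤ sieveError j * N := by
  have hle : j ≤ k / 20 := by
    have := Nat.le_self_pow two_ne_zero j
    omega
  refine norm_expSum_sieveWeight_mul_le (D := 2 ^ j ^ 2) (squarefree_primorial _)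
    (primesLE_subset_primeFactors_primorial (Nat.pow_le_pow_right two_pos hle))
    (isSievingFamily_sievingFamily Nat.one_le_two_pow) (fun A hA hcard => ?_)
    (le_trans ?_ hN) hω
  · calc ∏ p ∈ A, p ≤ (2 ^ j) ^ #A :=
          prod_le_pow_card _ _ _ fun p hp => Nat.le_of_mem_primesLE (hA hp)
      _ ≤ (2 ^ j) ^ j := Nat.pow_le_pow_right (by positivity) hcard
      _ = 2 ^ j ^ 2 := by rw [← pow_mul, sq]
  · rw [← pow_add, ← pow_add, ← pow_mul]
    exact Nat.pow_le_pow_right two_pos (by omega)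

lemma sieveError_le {j : ℕ} (hj : 1 ≤ j) : sieveError j ≤ 5 * 16 ^ 17 * j ^ 34 / 2 ^ j := by
  have hW := one_le_mertensProd (P := Nat.primesLE (2 ^ j)) fun _ => Nat.prime_of_mem_primesLE
  have hWj := mertensProd_primesLE_le j hj
  set W := mertensProd (Nat.primesLE (2 ^ j))
  have hpow : W ^ 17 ≤ 16 ^ 17 * (j : ℝ) ^ 34 := by
    calc W ^ 17 ≤ (16 * (j : ℝ) ^ 2) ^ 17 := by gcongr
      _ = _ := by ring
  have hsq : 6 * W ^ 2 ≤ 16 ^ 17 * (j : ℝ) ^ 34 := by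
    have : (1 : ℝ) ≤ j := by exact_mod_cast hj
    calc 6 * W ^ 2 ≤ 6 * (16 * (j : ℝ) ^ 2) ^ 2 := by gcongr
      _ = 6 * 16 ^ 2 * (j : ℝ) ^ 4 := by ring
      _ ≤ 16 ^ 17 * (j : ℝ) ^ 34 := by gcongr <;> norm_num
  calc sieveError j ≤ 6 * W ^ 2 / 2 ^ j + 4 * W ^ 17 / 2 ^ j := by
        unfold sieveError; gcongr; norm_num
    _ = (6 * W ^ 2 + 4 * W ^ 17) / 2 ^ j := by rw [add_div]
    _ ≤ 5 * 16 ^ 17 * j ^ 34 / 2 ^ j := by gcongr; linarith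

lemma exists_two_pow_mul_sieveError_sq_le :
    ∃ C : ℝ, 0 < C ∧ ∀ j, 1 ≤ j → 2 ^ j * sieveError j ^ 2 ≤ C * (3 / 4) ^ j := by
  obtain ⟨B, hB⟩ := (tendsto_pow_const_mul_const_pow_of_abs_lt_one 68
    (show |(2 / 3 : ℝ)| < 1 by norm_num [abs_of_pos])).bddAbove_range
  have hB : ∀ j : ℕ, (j : ℝ) ^ 68 * (2 / 3) ^ j ≤ B := fun j => hB ⟨j, rfl⟩
  have hB0 : 0 < B := lt_of_lt_of_le (by norm_num) (hB 1)
  refine ⟨(5 * 16 ^ 17) ^ 2 * B, by positivity, fun j hj => ?_⟩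
  calc 2 ^ j * sieveError j ^ 2 ≤ 2 ^ j * (5 * 16 ^ 17 * (j : ℝ) ^ 34 / 2 ^ j) ^ 2 := by
        have := sieveError_nonneg j
        gcongr
        exact sieveError_le hj
    _ = (5 * 16 ^ 17) ^ 2 * ((j : ℝ) ^ 68 * ((2 / 3) ^ j * (3 / 4) ^ j)) := by
        rw [← mul_pow, show (2 / 3 * (3 / 4) : ℝ) = 2⁻¹ by norm_num, inv_pow]
        field_simp
    _ = (5 * 16 ^ 17) ^ 2 * ((j : ℝ) ^ 68 * (2 / 3) ^ j) * (3 / 4) ^ j := by ring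
    _ ≤ _ := by gcongr; exact hB j

end KernelBounds

/-! ### Maximal correlations -/

section CorrMaximal

variable {L : ℕ} {φ : ℕ → ℝ} {f : ℤ → ℝ} {t B : ℝ}

lemma corr_add (N : ℕ) (φ ψ : ℕ → ℝ) (f : ℤ → ℝ) (x : ℤ) :
    corr N (φ + ψ) f x = corr N φ f x + corr N ψ f x := by
  simp only [corr, Pi.add_apply, add_mul, sum_add_distrib]

lemma corr_sum {ι : Type*} (s : Finset ι) (N : ℕ) (φ : ι → ℕ → ℝ) (f : ℤ → ℝ) (x : ℤ) :
    corr N (∑ i ∈ s, φ i) f x = ∑ i ∈ s, corr N (φ i) f x := by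
  simp only [corr, Finset.sum_apply, sum_mul]
  exact sum_comm

lemma corr_mul_of_periodic (hφ : Function.Periodic φ L) (K : ℕ) (f : ℤ → ℝ) (x : ℤ) :
    corr (L * K) φ f x = ∑ m ∈ range K, corr L φ f (x + L * m) := by
  have hshift (i m : ℕ) : φ (m + i * L) = φ m := hφ.nsmul i m
  simp only [corr, sum_range_mul_eq_sum_sum, hshift]
  refine sum_congr rfl fun i _ => sum_congr rfl fun m _ => ?_
  push_cast
  ring_nf

/-- The superlevel set `{x | sup_N N⁻¹ ∑_{n < N} φ(n) f(x + n) ≥ t}`, where the supremum runs over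
the positive multiples `N` of `L`. -/
def corrMaximalSet (L : ℕ) (φ : ℕ → ℝ) (f : ℤ → ℝ) (t : ℝ) : Set ℤ :=
  {x | ∃ N : ℕ, 0 < N ∧ L ∣ N ∧ t * N ≤ corr N φ f x}

lemma corrMaximalSet_subset_maximalSet (hφ : Function.Periodic φ L) :
    corrMaximalSet L φ f t ⊆ maximalSet L (corr L φ f) (t * L) := by
  rintro x ⟨N, hN, ⟨K, rfl⟩, hx⟩
  refine ⟨K, Nat.pos_of_mul_pos_left hN, ?_⟩
  rw [← corr_mul_of_periodic hφ]
  simpa [mul_assoc] using hx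

lemma corrMaximalSet_one_subset_maximalSet (hB : 0 < B) (hφ : ∀ n, φ n ≤ B) (hf : ∀ y, 0 ≤ f y) :
    corrMaximalSet 1 φ f t ⊆ maximalSet 1 f (t / B) := by
  rintro x ⟨N, hN, -, hx⟩
  refine ⟨N, hN, ?_⟩
  rw [div_mul_eq_mul_div, div_le_iff₀' hB, mul_sum]
  refine hx.trans (sum_le_sum fun n _ => ?_)
  rw [Nat.cast_one, one_mul]
  exact mul_le_mul_of_nonneg_right (hφ n) (hf _)

variable {F : Finset ℤ} {ε : ℝ}

lemma hasCardLE_corrMaximalSet (hL : 0 < L) (hφ : Function.Periodic φ L) (ht : 0 < t)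
    (hε : ∀ ω : ℂ, ‖ω‖ = 1 → ‖expSum L φ ω‖ ≤ ε * L) (hf : ∀ z ∉ F, f z = 0) :
    HasCardLE (corrMaximalSet L φ f t) (ε ^ 2 / t ^ 2 * ∑ z ∈ F, f z ^ 2) := by
  refine (hasCardLE_maximalSet_of_sq hL (by positivity) (sum_corr_sq_le hε hf)).mono
    (corrMaximalSet_subset_maximalSet hφ) (le_of_eq ?_)
  field_simp

lemma hasCardLE_setOf_le_corr (hL : 0 < L) (ht : 0 < t)
    (hε : ∀ ω : ℂ, ‖ω‖ = 1 → ‖expSum L φ ω‖ ≤ ε * L) (hf : ∀ z ∉ F, f z = 0) :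
    HasCardLE {x | t * L ≤ corr L φ f x} (ε ^ 2 / t ^ 2 * ∑ z ∈ F, f z ^ 2) := by
  refine (hasCardLE_setOf_le_of_sq (by positivity) (sum_corr_sq_le hε hf)).mono subset_rfl
    (le_of_eq ?_)
  field_simp

end CorrMaximal

/-! ### Decomposition of the dyadic averages -/

section Decomposition

variable {f : ℤ → ℝ} {x : ℤ} {μ : ℝ} {j₀ j k N : ℕ}

lemma setOf_lt_dyadicPrimeAvg_subset_maximalSet (hf : ∀ y, 0 ≤ f y) {T : ℝ} (hT : 0 < T) :
    {x | ∃ k : ℕ, (k : ℝ) ≤ T ∧ μ < dyadicPrimeAvg f k x} ⊆ maximalSet 1 f (μ / (2 * T)) := by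
  rintro x ⟨k, hkT, hx⟩
  have hsub : primesIoc (2 ^ (k - 1)) (2 ^ k) ⊆ range (2 ^ k + 1) := fun p hp =>
    mem_range.2 (Nat.lt_succ_of_le (mem_primesIoc.1 hp).1.2)
  set S := ∑ m ∈ range (2 ^ k + 1), f (x + m)
  have hS : ∑ p ∈ primesIoc (2 ^ (k - 1)) (2 ^ k), f (x + p) ≤ S :=
    sum_le_sum_of_subset_of_nonneg hsub fun _ _ _ => hf _
  have hS0 : 0 ≤ S := sum_nonneg fun _ _ => hf _
  have hμ : μ ≤ T / 2 ^ k * S := by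
    refine hx.le.trans ?_
    unfold dyadicPrimeAvg
    gcongr
    exact sum_nonneg fun _ _ => hf _
  refine ⟨2 ^ k + 1, by positivity, ?_⟩
  simp only [Nat.cast_one, one_mul]
  calc μ / (2 * T) * (2 ^ k + 1 : ℕ) ≤ T / 2 ^ k * S / (2 * T) * (2 ^ k + 1 : ℕ) := by gcongr
    _ = (2 ^ k + 1) / (2 * 2 ^ k) * S := by push_cast; field_simp
    _ ≤ S := mul_le_of_le_one_left hS0 <| (div_le_one (by positivity)).2 <| by
        linarith [one_le_pow₀ one_le_two (M₀ := ℝ) (n := k)]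

lemma mul_lt_corr_of_lt_dyadicPrimeAvg (hf : ∀ y, 0 ≤ f y) (hμ : 0 ≤ μ) (hk : 20 ≤ k) (hj : j < k)
    (hkN : 2 ^ k < N) (hNk : N ≤ 2 * 2 ^ k) (hx : μ < dyadicPrimeAvg f k x) :
    μ / 240 * N <
      corr N (sieveWeight j * selbergWeight (sievingFamily (2 ^ j) (2 ^ (k / 20)))) f x := by
  set g := selbergWeight (sievingFamily (2 ^ j) (2 ^ (k / 20)))
  have hweight (n : ℕ) : 0 ≤ sieveWeight j n * g n :=
    mul_nonneg (sieveWeight_nonneg j n)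
      (selbergWeight_nonneg (fun _ => prime_of_mem_sievingFamily) n)
  have hsub : primesIoc (2 ^ (k - 1)) (2 ^ k) ⊆ range N := fun p hp =>
    mem_range.2 ((mem_primesIoc.1 hp).1.2.trans_lt hkN)
  have hNk : (N : ℝ) ≤ 2 * 2 ^ k := by exact_mod_cast hNk
  suffices μ * 2 ^ k < 120 * corr N (sieveWeight j * g) f x by nlinarith
  calc μ * 2 ^ k < dyadicPrimeAvg f k x * 2 ^ k := by gcongr
    _ = ∑ p ∈ primesIoc (2 ^ (k - 1)) (2 ^ k), k * f (x + p) := by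
        rw [dyadicPrimeAvg, ← mul_sum]; field_simp
    _ ≤ ∑ p ∈ primesIoc (2 ^ (k - 1)) (2 ^ k), 120 * (sieveWeight j p * g p) * f (x + p) :=
        sum_le_sum fun p hp => mul_le_mul_of_nonneg_right
          (le_coprimeWeight_mul_selbergWeight hk hj hp) (hf _)
    _ ≤ ∑ n ∈ range N, 120 * (sieveWeight j n * g n) * f (x + n) :=
        sum_le_sum_of_subset_of_nonneg hsub fun n _ _ =>
          mul_nonneg (mul_nonneg (by norm_num) (hweight n)) (hf _)
    _ = 120 * corr N (sieveWeight j * g) f x := by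
        simp only [corr, mul_sum, Pi.mul_apply, mul_assoc]

lemma sieveWeight_mul_selbergWeight_eq (k : ℕ) (hj : j₀ ≤ j) :
    sieveWeight j * selbergWeight (sievingFamily (2 ^ j) (2 ^ (k / 20))) =
      sieveWeight j₀ + ∑ i ∈ range (j - j₀), sieveIncrement (j₀ + i) + sieveRemainder j k := by
  have htel : ∑ i ∈ range (j - j₀), sieveIncrement (j₀ + i) = sieveWeight j - sieveWeight j₀ := by
    rw [← sum_Ico_eq_sum_range]
    exact sum_Ico_sub sieveWeight hj
  rw [htel, sieveRemainder]
  ring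

lemma sq_le_two_mul_two_pow (j : ℕ) : j ^ 2 ≤ 2 * 2 ^ j := by
  rcases Nat.lt_or_ge j 3 with h | h
  · interval_cases j <;> norm_num
  induction j, h using Nat.le_induction with
  | base => norm_num
  | succ m hm ih => rw [pow_succ 2 m]; nlinarith

lemma exists_sieve_level (hk : 20 * j₀ ^ 2 ≤ k) :
    ∃ j, j₀ ≤ j ∧ k < 40 * 2 ^ (j + 1) ∧ 20 * j ^ 2 ≤ k ∧
      ∃ L, 0 < L ∧ L ≤ 2 ^ k ∧ ∀ i < j - j₀, blockLength (j₀ + i + 1) ∣ L := by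
  by_cases h : k < 40 * 2 ^ (j₀ + 1)
  · exact ⟨j₀, le_rfl, h, hk, 1, one_pos, Nat.one_le_two_pow, by simp⟩
  have hk40 : 2 ^ (j₀ + 1) ≤ k / 40 := by omega
  have hk0 : k / 40 ≠ 0 := (Nat.two_pow_pos _ |>.trans_le hk40).ne'
  set j := Nat.log 2 (k / 40)
  have hj : j₀ + 1 ≤ j := (Nat.le_log_iff_pow_le one_lt_two hk0).2 hk40
  have hlow : 2 ^ j ≤ k / 40 := Nat.pow_log_le_self 2 hk0
  have hup : k / 40 < 2 ^ (j + 1) := Nat.lt_pow_succ_log_self one_lt_two _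
  have hsq := sq_le_two_mul_two_pow j
  exact ⟨j, by omega, by omega, by omega, blockLength j, blockLength_pos j,
    (blockLength_le j).trans (Nat.pow_le_pow_right two_pos (by omega)),
    fun i hi => blockLength_dvd_blockLength (by omega)⟩

lemma exists_sieve_scale (j₀ : ℕ) : ∃ N : ℕ → ℕ, ∀ k, 20 * j₀ ^ 2 ≤ k →
    2 ^ k < N k ∧ N k ≤ 2 * 2 ^ k ∧ ∃ j, j₀ ≤ j ∧ k < 40 * 2 ^ (j + 1) ∧ 20 * j ^ 2 ≤ k ∧
      ∀ i < j - j₀, blockLength (j₀ + i + 1) ∣ N k := by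
  suffices ∀ k, ∃ N, 20 * j₀ ^ 2 ≤ k → 2 ^ k < N ∧ N ≤ 2 * 2 ^ k ∧ ∃ j, j₀ ≤ j ∧
      k < 40 * 2 ^ (j + 1) ∧ 20 * j ^ 2 ≤ k ∧ ∀ i < j - j₀, blockLength (j₀ + i + 1) ∣ N from
    Classical.skolem.1 this
  intro k
  by_cases hk : 20 * j₀ ^ 2 ≤ k
  · obtain ⟨j, hj, hkj, hjk, L, hL, hLk, hdvd⟩ := exists_sieve_level hk
    refine ⟨L * (2 ^ k / L + 1), fun _ => ⟨Nat.lt_mul_div_succ _ hL, ?_, j, hj, hkj, hjk,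
      fun i hi => (hdvd i hi).mul_right _⟩⟩
    have := Nat.mul_div_le (2 ^ k) L
    rw [mul_add_one]
    omega
  · exact ⟨0, fun h => absurd h hk⟩

lemma sum_pow_le_inv_one_sub {r : ℝ} (hr₀ : 0 ≤ r) (hr₁ : r < 1) (J : Finset ℕ) :
    ∑ i ∈ J, r ^ i ≤ (1 - r)⁻¹ :=
  sum_le_hasSum J (fun _ _ => by positivity) (hasSum_geometric_of_lt_one hr₀ hr₁)

lemma mem_corrMaximalSet_or_of_lt_dyadicPrimeAvg (hf : ∀ y, 0 ≤ f y) (hμ : 0 ≤ μ) (hk : 20 ≤ k)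
    (hj₀ : j₀ ≤ j) (hj : j < k) (hkN : 2 ^ k < N) (hNk : N ≤ 2 * 2 ^ k)
    (hdvd : ∀ i < j - j₀, blockLength (j₀ + i + 1) ∣ N) (hx : μ < dyadicPrimeAvg f k x) :
    x ∈ corrMaximalSet 1 (sieveWeight j₀) f (μ / 720) ∨
      (∃ i, x ∈ corrMaximalSet (blockLength (j₀ + i + 1)) (sieveIncrement (j₀ + i)) f
        (μ / 720 * ((3 / 4) ^ i / 4))) ∨
      μ / 720 * N ≤ corr N (sieveRemainder j k) f x := by
  have hN : 0 < N := (Nat.zero_le _).trans_lt hkN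
  have hlarge := mul_lt_corr_of_lt_dyadicPrimeAvg hf hμ hk hj hkN hNk hx
  rw [sieveWeight_mul_selbergWeight_eq k hj₀, corr_add, corr_add, corr_sum] at hlarge
  by_contra! hsmall
  obtain ⟨hmain, hincr, hrem⟩ := hsmall
  have hmain : corr N (sieveWeight j₀) f x < μ / 720 * N :=
    not_le.1 fun h => hmain ⟨N, hN, one_dvd N, h⟩
  have hincr : ∑ i ∈ range (j - j₀), corr N (sieveIncrement (j₀ + i)) f x ≤ μ / 720 * N := by
    calc _ ≤ ∑ i ∈ range (j - j₀), μ / 720 * ((3 / 4) ^ i / 4) * N :=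
          sum_le_sum fun i hi =>
            (not_le.1 fun h => hincr i ⟨N, hN, hdvd i (mem_range.1 hi), h⟩).le
      _ = μ / 720 * N * ((∑ i ∈ range (j - j₀), (3 / 4) ^ i) / 4) := by
          rw [sum_div, mul_sum]; exact sum_congr rfl fun i _ => by ring
      _ ≤ μ / 720 * N * 1 := by
          gcongr
          linarith [sum_pow_le_inv_one_sub (r := 3 / 4) (by norm_num) (by norm_num)
            (range (j - j₀))]
      _ = _ := mul_one _
  linarith

end Decomposition

/-! ### The weak type bound -/

section Counting

variable {f : ℤ → ℝ} {F : Finset ℤ} {t : ℝ} {j₀ j : ℕ}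

lemma sum_le_sum_of_eq_zero_of_notMem (hf₀ : ∀ y, 0 ≤ f y) (hf : ∀ z ∉ F, f z = 0)
    (Y : Finset ℤ) : ∑ y ∈ Y, f y ≤ ∑ z ∈ F, f z := by
  classical
  calc ∑ y ∈ Y, f y ≤ ∑ y ∈ Y ∪ F, f y :=
        sum_le_sum_of_subset_of_nonneg subset_union_left fun _ _ _ => hf₀ _
    _ = ∑ z ∈ F, f z := (sum_subset subset_union_right fun z _ hz => hf z hz).symm

lemma hasCardLE_corrMaximalSet_sieveIncrement (ht : 0 < t) (hf : ∀ z ∉ F, f z = 0) (j₀ i : ℕ) :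
    HasCardLE (corrMaximalSet (blockLength (j₀ + i + 1)) (sieveIncrement (j₀ + i)) f
        (t * ((3 / 4) ^ i / 4)))
      (16 * (2 ^ (j₀ + i) * sieveError (j₀ + i) ^ 2 / t ^ 2 * ∑ z ∈ F, f z ^ 2)) := by
  refine (hasCardLE_corrMaximalSet (blockLength_pos _) (sieveIncrement_periodic _)
    (by positivity) (fun ω => norm_expSum_sieveIncrement_le _) hf).mono subset_rfl ?_
  have hpow : ((16 / 9 : ℝ)) ^ i ≤ 2 ^ (j₀ + i) :=
    (pow_le_pow_left₀ (by norm_num) (by norm_num) i).trans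
      (pow_le_pow_right₀ one_le_two (Nat.le_add_left i j₀))
  have hinv : ((3 / 4 : ℝ) ^ i) ^ 2 * (16 / 9) ^ i = 1 := by
    rw [← pow_mul, mul_comm i, pow_mul, ← mul_pow]; norm_num
  calc sieveError (j₀ + i) ^ 2 / (t * ((3 / 4) ^ i / 4)) ^ 2 * ∑ z ∈ F, f z ^ 2
      = 16 * ((16 / 9) ^ i * sieveError (j₀ + i) ^ 2 / t ^ 2 * ∑ z ∈ F, f z ^ 2) := by
        field_simp
        linear_combination (-16 * sieveError (j₀ + i) ^ 2 * ∑ z ∈ F, f z ^ 2) * hinv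
    _ ≤ _ := by gcongr

lemma hasCardLE_setOf_exists_le_corr_sieveRemainder (ht : 0 < t) (hf : ∀ z ∉ F, f z = 0)
    {N : ℕ → ℕ} (hN : ∀ k, 20 * j ^ 2 ≤ k → 2 ^ k ≤ N k) :
    HasCardLE {x | ∃ k, k < 40 * 2 ^ (j + 1) ∧ 20 * j ^ 2 ≤ k ∧
        t * N k ≤ corr (N k) (sieveRemainder j k) f x}
      (80 * (2 ^ j * sieveError j ^ 2 / t ^ 2 * ∑ z ∈ F, f z ^ 2)) := by
  set K := (range (40 * 2 ^ (j + 1))).filter fun k => 20 * j ^ 2 ≤ k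
  have hlevel : ∀ k ∈ K, HasCardLE {x | t * N k ≤ corr (N k) (sieveRemainder j k) f x}
      (sieveError j ^ 2 / t ^ 2 * ∑ z ∈ F, f z ^ 2) := fun k hk => by
    have hjk := (mem_filter.1 hk).2
    exact hasCardLE_setOf_le_corr ((Nat.two_pow_pos k).trans_le (hN k hjk)) ht
      (fun ω => norm_expSum_sieveRemainder_le hjk (hN k hjk)) hf
  refine (HasCardLE.biUnion K hlevel).mono ?_ ?_
  · rintro x ⟨k, hk, hjk, hx⟩
    exact Set.mem_biUnion (mem_filter.2 ⟨mem_range.2 hk, hjk⟩) hx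
  · have hK : (#K : ℝ) ≤ 80 * 2 ^ j := by
      have : #K ≤ 80 * 2 ^ j := (card_filter_le ..).trans_eq (by rw [card_range]; ring)
      exact_mod_cast this
    rw [sum_const, nsmul_eq_mul]
    calc (#K : ℝ) * (sieveError j ^ 2 / t ^ 2 * ∑ z ∈ F, f z ^ 2)
        ≤ 80 * 2 ^ j * (sieveError j ^ 2 / t ^ 2 * ∑ z ∈ F, f z ^ 2) := by gcongr
      _ = _ := by ring

/-- The points where, for some sieve level `j ≥ j₀`, either the correlation of `f` with the sieve
increment of level `j` or that with the sieve remainder of level `j` is large. The remainder only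
has to be tested along one length `N k` for each of the `O(2 ^ j)` dyadic scales `k` sieved at
level `j`. -/
def sieveExceptionalSet (f : ℤ → ℝ) (t : ℝ) (j₀ : ℕ) (N : ℕ → ℕ) : Set ℤ :=
  ⋃ i, corrMaximalSet (blockLength (j₀ + i + 1)) (sieveIncrement (j₀ + i)) f
      (t * ((3 / 4) ^ i / 4)) ∪
    {x | ∃ k, k < 40 * 2 ^ (j₀ + i + 1) ∧ 20 * (j₀ + i) ^ 2 ≤ k ∧
      t * N k ≤ corr (N k) (sieveRemainder (j₀ + i) k) f x}

lemma hasCardLE_sieveExceptionalSet {C : ℝ}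
    (hC : ∀ j, 1 ≤ j → 2 ^ j * sieveError j ^ 2 ≤ C * (3 / 4) ^ j) (hC₀ : 0 ≤ C) (ht : 0 < t)
    (hf : ∀ z ∉ F, f z = 0) (hj₀ : 1 ≤ j₀) {N : ℕ → ℕ} (hN : ∀ k, 20 * j₀ ^ 2 ≤ k → 2 ^ k ≤ N k) :
    HasCardLE (sieveExceptionalSet f t j₀ N)
      (384 * C * ((3 / 4) ^ j₀ / t ^ 2 * ∑ z ∈ F, f z ^ 2)) := by
  have hS : 0 ≤ ∑ z ∈ F, f z ^ 2 := sum_nonneg fun _ _ => sq_nonneg _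
  refine HasCardLE.iUnion (c := fun i => 96 * (C * (3 / 4) ^ (j₀ + i) / t ^ 2 * ∑ z ∈ F, f z ^ 2))
    (fun i => ?_) fun J => ?_
  · have hN' : ∀ k, 20 * (j₀ + i) ^ 2 ≤ k → 2 ^ k ≤ N k := fun k hk =>
      hN k (le_trans (by gcongr; omega) hk)
    refine ((hasCardLE_corrMaximalSet_sieveIncrement ht hf j₀ i).union
      (hasCardLE_setOf_exists_le_corr_sieveRemainder ht hf hN')).mono subset_rfl ?_
    rw [← add_mul, show (16 + 80 : ℝ) = 96 by norm_num]
    have := hC (j₀ + i) (by omega)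
    gcongr ?_ * (?_ / _ * _)
  · calc ∑ i ∈ J, 96 * (C * (3 / 4) ^ (j₀ + i) / t ^ 2 * ∑ z ∈ F, f z ^ 2)
        = 96 * C * ((3 / 4) ^ j₀ / t ^ 2 * ∑ z ∈ F, f z ^ 2) * ∑ i ∈ J, (3 / 4) ^ i := by
          rw [mul_sum]; exact sum_congr rfl fun i _ => by ring
      _ ≤ 96 * C * ((3 / 4) ^ j₀ / t ^ 2 * ∑ z ∈ F, f z ^ 2) * (1 - 3 / 4)⁻¹ := by
          gcongr
          exact sum_pow_le_inv_one_sub (by norm_num) (by norm_num) J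
      _ = _ := by ring

lemma setOf_lt_dyadicPrimeAvg_subset (hf : ∀ y, 0 ≤ f y) {μ : ℝ} (hμ : 0 ≤ μ) (hj₀ : 1 ≤ j₀) :
    ∃ N : ℕ → ℕ, (∀ k, 20 * j₀ ^ 2 ≤ k → 2 ^ k ≤ N k) ∧
      {x | ∃ k, μ < dyadicPrimeAvg f k x} ⊆
        maximalSet 1 f (μ / (2 * (20 * j₀ ^ 2))) ∪
          maximalSet 1 f (μ / 720 / (16 * j₀ ^ 2)) ∪ sieveExceptionalSet f (μ / 720) j₀ N := by
  obtain ⟨N, hN⟩ := exists_sieve_scale j₀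
  refine ⟨N, fun k hk => (hN k hk).1.le, ?_⟩
  rintro x ⟨k, hx⟩
  rcases lt_or_ge k (20 * j₀ ^ 2) with hk | hk
  · exact .inl <| .inl <| setOf_lt_dyadicPrimeAvg_subset_maximalSet hf (by positivity)
      ⟨k, by exact_mod_cast hk.le, hx⟩
  obtain ⟨hkN, hNk, j, hj₀j, hkj, hjk, hdvd⟩ := hN k hk
  rcases mem_corrMaximalSet_or_of_lt_dyadicPrimeAvg hf hμ (by nlinarith) hj₀j (by nlinarith)
    hkN hNk hdvd hx with hmain | ⟨i, hincr⟩ | hrem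
  · exact .inl <| .inr <|
      corrMaximalSet_one_subset_maximalSet (by positivity) (sieveWeight_le hj₀) hf hmain
  · exact .inr <| Set.mem_iUnion.2 ⟨i, .inl hincr⟩
  · obtain ⟨i, rfl⟩ := Nat.exists_eq_add_of_le hj₀j
    exact .inr <| Set.mem_iUnion.2 ⟨i, .inr ⟨k, hkj, hjk, hrem⟩⟩

theorem exists_hasCardLE_setOf_lt_dyadicPrimeAvg :
    ∃ C : ℝ, 0 < C ∧ ∀ {f : ℤ → ℝ} {F : Finset ℤ}, (∀ y, 0 ≤ f y) → (∀ z ∉ F, f z = 0) →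
      ∀ {μ : ℝ}, 0 < μ → ∀ {j₀ : ℕ}, 1 ≤ j₀ → HasCardLE {x | ∃ k, μ < dyadicPrimeAvg f k x}
        (C * (j₀ ^ 2 / μ * ∑ z ∈ F, f z + (3 / 4) ^ j₀ / μ ^ 2 * ∑ z ∈ F, f z ^ 2)) := by
  obtain ⟨C, hC₀, hC⟩ := exists_two_pow_mul_sieveError_sq_le
  refine ⟨11560 + 384 * C * 720 ^ 2, by positivity, ?_⟩
  intro f F hf₀ hf μ hμ j₀ hj₀
  obtain ⟨N, hN, hsub⟩ := setOf_lt_dyadicPrimeAvg_subset hf₀ hμ.le hj₀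
  have hmaximal {s : ℝ} (hs : 0 < s) : HasCardLE (maximalSet 1 f s) ((∑ z ∈ F, f z) / s) :=
    hasCardLE_maximalSet one_pos hs (sum_le_sum_of_eq_zero_of_notMem hf₀ hf)
  refine (((hmaximal (by positivity)).union (hmaximal (by positivity))).union
    (hasCardLE_sieveExceptionalSet hC hC₀.le (by positivity) hf hj₀ hN)).mono hsub ?_
  set a := j₀ ^ 2 / μ * ∑ z ∈ F, f z
  set b := (3 / 4) ^ j₀ / μ ^ 2 * ∑ z ∈ F, f z ^ 2
  have ha : 0 ≤ a := mul_nonneg (by positivity) (sum_nonneg fun _ _ => hf₀ _)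
  have hb : 0 ≤ b := mul_nonneg (by positivity) (sum_nonneg fun _ _ => sq_nonneg _)
  calc _ = 11560 * a + 384 * C * 720 ^ 2 * b := by simp only [a, b]; field_simp; ring
    _ ≤ 11560 * a + 384 * C * 720 ^ 2 * b + (11560 * b + 384 * C * 720 ^ 2 * a) :=
        le_add_of_nonneg_right (by positivity)
    _ = _ := by ring

end Counting

lemma exists_nat_le_mul_log_and_pow_le {l : ℝ} (hl₀ : 0 < l) (hl₁ : l < 1) :
    ∃ j : ℕ, 1 ≤ j ∧ j ≤ 4 * Real.log (Real.exp 1 / l) ∧ (3 / 4 : ℝ) ^ j ≤ l := by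
  have hlog : Real.log l < 0 := Real.log_neg hl₀ hl₁
  have hL : Real.log (Real.exp 1 / l) = 1 - Real.log l := by
    rw [Real.log_div (Real.exp_ne_zero _) hl₀.ne', Real.log_exp]
  have hle := Nat.le_ceil (4 * -Real.log l)
  have hlt := Nat.ceil_lt_add_one (a := 4 * -Real.log l) (by linarith)
  refine ⟨⌈4 * -Real.log l⌉₊ + 1, by omega, by push_cast; linarith, ?_⟩
  rw [← Real.log_le_log_iff (by positivity) hl₀, Real.log_pow]
  have : Real.log (3 / 4) ≤ -1 / 4 :=
    (Real.log_le_sub_one_of_pos (by norm_num)).trans_eq (by norm_num)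
  push_cast
  nlinarith

lemma exists_sq_div_add_pow_div_sq_le {l : ℝ} (hl₀ : 0 < l) (hl₁ : l < 1) :
    ∃ j : ℕ, 1 ≤ j ∧ (j : ℝ) ^ 2 / (l / 64) + (3 / 4) ^ j / (l / 64) ^ 2 ≤
      66560 * (l⁻¹ * Real.log (Real.exp 1 / l) ^ 2) := by
  obtain ⟨j, hj, hjL, hjl⟩ := exists_nat_le_mul_log_and_pow_le hl₀ hl₁
  refine ⟨j, hj, ?_⟩
  have hj' : (1 : ℝ) ≤ j ^ 2 := one_le_pow₀ (by exact_mod_cast hj)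
  calc (j : ℝ) ^ 2 / (l / 64) + (3 / 4) ^ j / (l / 64) ^ 2
      ≤ j ^ 2 / (l / 64) + l / (l / 64) ^ 2 := by gcongr
    _ = 64 * (l⁻¹ * j ^ 2) + 4096 * (l⁻¹ * 1) := by field_simp; ring
    _ ≤ 64 * (l⁻¹ * j ^ 2) + 4096 * (l⁻¹ * j ^ 2) := by gcongr
    _ = 4160 * (l⁻¹ * j ^ 2) := by ring
    _ ≤ 4160 * (l⁻¹ * (4 * Real.log (Real.exp 1 / l)) ^ 2) := by gcongr
    _ = _ := by ring

end PrimeAverages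

/-- Restricted weak type `(1,1)` inequality with logarithmic loss for the maximal function
of the averages along the primes: for a finite `F ⊆ ℤ` and `0 < λ < 1`,
`#{x : sup_{N ≥ 2} 𝒜_N(𝟙_F)(x) > λ} ≤ C λ⁻¹ log²(e/λ) #F`. -/
theorem stmt_4 :
    ∃ C : ℝ, 0 < C ∧
      ∀ (F : Finset ℤ) (l : ℝ), 0 < l → l < 1 →
        {x : ℤ | ∃ N : ℕ, 2 ≤ N ∧ l < primeAvg ((F : Set ℤ).indicator 1) N x}.Finite ∧
        ({x : ℤ | ∃ N : ℕ, 2 ≤ N ∧ l < primeAvg ((F : Set ℤ).indicator 1) N x}.ncard : ℝ) ≤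
          C * l⁻¹ * (Real.log (Real.exp 1 / l)) ^ 2 * F.card := by
  obtain ⟨C, hC₀, hC⟩ := PrimeAverages.exists_hasCardLE_setOf_lt_dyadicPrimeAvg
  refine ⟨C * 66560, by positivity, fun F l hl₀ hl₁ => ?_⟩
  obtain ⟨j, hj, hjl⟩ := PrimeAverages.exists_sq_div_add_pow_div_sq_le hl₀ hl₁
  have hf (y : ℤ) : 0 ≤ (F : Set ℤ).indicator (1 : ℤ → ℝ) y :=
    Set.indicator_nonneg (fun _ _ => zero_le_one) y
  refine (hC hf (F := F) (by simp) (μ := l / 64) (by positivity) hj).mono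
    (fun x ⟨N, hN, hx⟩ => ?_) ?_
  · by_contra! hsmall
    have := PrimeAverages.primeAvg_le_of_dyadicPrimeAvg_le
      (fun k _ => not_lt.1 fun h => hsmall ⟨k, h⟩) hf hN
    linarith
  · have hF : ∀ z ∈ F, (F : Set ℤ).indicator (1 : ℤ → ℝ) z = 1 := fun z hz =>
      Set.indicator_of_mem (Finset.mem_coe.2 hz) 1
    have hF2 : ∀ z ∈ F, (F : Set ℤ).indicator (1 : ℤ → ℝ) z ^ 2 = 1 := fun z hz => by
      rw [hF z hz, one_pow]
    rw [Finset.sum_congr rfl hF, Finset.sum_congr rfl hF2, Finset.sum_const, nsmul_one, ← add_mul,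
      ← mul_assoc]
    calc _ ≤ C * (66560 * (l⁻¹ * Real.log (Real.exp 1 / l) ^ 2)) * F.card := by gcongr
      _ = _ := by ring
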